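/- arXiv:2506.11573 — 2 statements merged into one kernel-verified Lean document; each statement's English description precedes it below -/
import Mathlib

section
/- Let K satisfy Assumption A, let T'' > 0, and let f be a mass-conserving weak solution of the coagulation equation on [0,T''] with kernel K and initial datum f_in, with 0 < v₀ := ∫ v f_in(dv) < ∞. Fix T ∈ (0,T''). Then there exist R₀ > 0 (depending on T and f) and a constant C > 0 (independent of m and R) such that for every t ∈ [0,T], every real m > 2 and every R ≥ R₀ with M := ∫_{[R,∞)} (v − R)^m f(dv,t) > 0, one has T ≤ t + C·M^{−(γ−1)/(m−1)}. -/
open MeasureTheory Set Filter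

noncomputable section

/-- Assumption A on the coagulation kernel `K(v,v') = h(v,v') g(v/(v+v'))`. -/
structure KernelAssumptionA (K : ℝ → ℝ → ℝ) (h : ℝ → ℝ → ℝ) (g : ℝ → ℝ)
    (γ H H₀ H₁ G₀ G₁ k : ℝ) : Prop where
  K_nonneg : ∀ v v', 0 ≤ v → 0 ≤ v' → 0 ≤ K v v'
  K_eq : ∀ v v', 0 ≤ v → 0 ≤ v' → 0 < v + v' →
      K v v' = h v v' * g (v / (v + v'))
  h_cont : ContinuousOn (fun p : ℝ × ℝ => h p.1 p.2) (Ici 0 ×ˢ Ici 0)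
  h_symm : ∀ v v', h v v' = h v' v
  γ_gt_one : 1 < γ
  H_gt_one : 1 < H
  H₀_pos : 0 < H₀
  h_lower : ∀ v v', 0 ≤ v → 0 ≤ v' → H < v + v' →
      H₀ * (v ^ γ + v' ^ γ) ≤ h v v'
  h_posOn : ∀ R : ℝ, 0 < R → ∃ C : ℝ, 0 < C ∧
      ∀ v ∈ Icc (1 / R) R, ∀ v' ∈ Icc (1 / R) R, C ≤ h v v'
  H₁_pos : 0 < H₁
  h_upper : ∀ v v', 0 ≤ v → 0 ≤ v' → h v v' ≤ H₁ * (v ^ γ + v' ^ γ)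
  g_cont : ContinuousOn g (Icc 0 1)
  g_symm : ∀ x ∈ Icc (0 : ℝ) 1, g x = g (1 - x)
  g_half : g (1 / 2) = 0
  G₀_pos : 0 < G₀
  G₁_pos : 0 < G₁
  k_ge_one : 1 ≤ k
  g_lower : ∀ x ∈ Icc (0 : ℝ) 1, G₀ * |x - 1 / 2| ^ k ≤ g x
  g_upper : ∀ x ∈ Icc (0 : ℝ) 1, g x ≤ G₁

/-- Weak solution of the coagulation equation on `[0, T]` with kernel `K`
and initial datum `fin`, in the sense of measures on `(0,∞)`. -/
structure IsWeakSolution (K : ℝ → ℝ → ℝ) (γ T : ℝ)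
    (f : ℝ → Measure ℝ) (fin : Measure ℝ) : Prop where
  conc : ∀ t ∈ Icc (0 : ℝ) T, f t (Iic 0) = 0
  time_cont : ∀ φ : ℝ → ℝ, Continuous φ → (∃ M : ℝ, ∀ v, |φ v| ≤ M) →
      ContinuousOn (fun t => ∫ v, φ v ∂(f t)) (Icc (0 : ℝ) T)
  moment_bound : ∃ C : ℝ, ∀ t ∈ Icc (0 : ℝ) T,
      Integrable (fun v => 1 + v ^ γ) (f t) ∧ (∫ v, (1 + v ^ γ) ∂(f t)) ≤ C
  weak_form : ∀ φ : ℝ → ℝ, Continuous φ → HasCompactSupport φ →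
      tsupport φ ⊆ Ioi 0 → ∀ t ∈ Icc (0 : ℝ) T,
      (∫ v, φ v ∂(f t)) - (∫ v, φ v ∂fin) =
        (1 / 2) * ∫ s in (0 : ℝ)..t,
          (∫ v, (∫ v', K v v' * (φ (v + v') - φ v - φ v') ∂(f s)) ∂(f s))

/-- The solution conserves mass on `[0, T]`. -/
def IsMassConserving (T : ℝ) (f : ℝ → Measure ℝ) (fin : Measure ℝ) : Prop :=
  Integrable (fun v => v) fin ∧
    ∀ t ∈ Icc (0 : ℝ) T,
      Integrable (fun v => v) (f t) ∧ (∫ v, v ∂(f t)) = ∫ v, v ∂fin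

/-- `μ` is a single Dirac measure `M • δ_V` with `M, V ∈ (0,∞)`. -/
def IsSingleDirac (μ : Measure ℝ) : Prop :=
  ∃ M V : ℝ, 0 < M ∧ 0 < V ∧ μ = ENNReal.ofReal M • Measure.dirac V


/-- A measure on `(0,∞)` with finite `1 + v^γ` moment is finite. -/
lemma rt_finite {γ : ℝ} {μ : Measure ℝ} (h0 : μ (Iic 0) = 0)
    (hi : Integrable (fun v => 1 + v ^ γ) μ) : IsFiniteMeasure μ := by
  have hpos : ∀ᵐ v ∂μ, 0 < v := by
    rw [ae_iff]
    simpa [not_lt, Iic] using h0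
  have : Integrable (fun _ : ℝ => (1 : ℝ)) μ := by
    refine hi.mono' aestronglyMeasurable_const ?_
    filter_upwards [hpos] with v hv
    have := Real.rpow_nonneg hv.le γ
    simp; linarith
  exact (integrable_const_iff_isFiniteMeasure one_ne_zero).1 this

lemma rt_ae_pos {μ : Measure ℝ} (h0 : μ (Iic 0) = 0) : ∀ᵐ v ∂μ, 0 < v := by
  rw [ae_iff]
  simpa [not_lt, Iic] using h0

lemma rt_kernel (f : ℝ → Measure ℝ) (T : ℝ) (B : ENNReal) (hB : B < ⊤)
    (hbd : ∀ t ∈ Icc (0 : ℝ) T, f t univ ≤ B)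
    (hfin : ∀ t ∈ Icc (0 : ℝ) T, IsFiniteMeasure (f t))
    (hc : ∀ φ : ℝ → ℝ, Continuous φ → (∃ M : ℝ, ∀ v, |φ v| ≤ M) →
      ContinuousOn (fun t => ∫ v, φ v ∂(f t)) (Icc (0 : ℝ) T)) :
    ∃ κ : ProbabilityTheory.Kernel ℝ ℝ, ProbabilityTheory.IsSFiniteKernel κ ∧
      ∀ t ∈ Icc (0 : ℝ) T, κ t = f t := by
  classical
  set F : ℝ → Measure ℝ := fun t => if t ∈ Icc (0 : ℝ) T then f t else 0 with hF
  have hFfin : ∀ t, IsFiniteMeasure (F t) := by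
    intro t
    by_cases ht : t ∈ Icc (0 : ℝ) T
    · simp only [hF, if_pos ht]; exact hfin t ht
    · simp only [hF, if_neg ht]; infer_instance
  have hIntg : ∀ φ : BoundedContinuousFunction ℝ NNReal,
      Measurable (fun t => ∫⁻ v, φ v ∂(F t)) := by
    intro φ
    have h1 : Measurable (fun t => ∫ v, (φ v : ℝ) ∂(F t)) := by
      have := hc (fun v => (φ v : ℝ)) (by fun_prop) ?_
      · have h2 : Measurable ((Icc (0:ℝ) T).indicator (fun t => ∫ v, (φ v : ℝ) ∂(f t))) := by
          classical
          rw [← Set.piecewise_eq_indicator]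
          exact this.measurable_piecewise continuousOn_const measurableSet_Icc
        convert h2 using 1
        ext t
        by_cases ht : t ∈ Icc (0 : ℝ) T
        · simp only [hF, if_pos ht, indicator_of_mem ht]
        · simp only [hF, if_neg ht, indicator_of_notMem ht]; simp
      · refine ⟨(nndist φ 0 : ℝ), fun v => ?_⟩
        rw [abs_of_nonneg (NNReal.coe_nonneg (φ v))]
        exact_mod_cast BoundedContinuousFunction.NNReal.upper_bound φ v
    have h3 : ∀ t, ∫⁻ v, φ v ∂(F t) = ENNReal.ofReal (∫ v, (φ v : ℝ) ∂(F t)) := by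
      intro t
      have := hFfin t
      rw [ofReal_integral_eq_lintegral_ofReal]
      · simp
      · exact BoundedContinuousFunction.integrable_of_nnreal (F t) φ
      · exact Filter.Eventually.of_forall fun v => (φ v).2
    simp_rw [h3]
    exact h1.ennreal_ofReal
  have hmeas : Measurable F := by
    refine Measurable.measure_of_isPiSystem (S := {s : Set ℝ | IsClosed s}) ?_ isPiSystem_isClosed ?_ ?_
    · rw [BorelSpace.measurable_eq (α := ℝ), borel_eq_generateFrom_isClosed]
    · intro s hs
      have hs' : IsClosed s := hs
      refine measurable_of_tendsto_metrizable (fun n => hIntg (hs'.apprSeq n)) ?_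
      rw [tendsto_pi_nhds]
      intro t
      have := hFfin t
      exact HasOuterApproxClosed.tendsto_lintegral_apprSeq hs' (F t)
    · have := hIntg 1
      simpa using this
  let κ : ProbabilityTheory.Kernel ℝ ℝ := ⟨F, hmeas⟩
  refine ⟨κ, ?_, fun t ht => ?_⟩
  · have : ProbabilityTheory.IsFiniteKernel κ := by
      refine ⟨B, hB, fun t => ?_⟩
      change F t univ ≤ B
      by_cases ht : t ∈ Icc (0 : ℝ) T
      · simp only [hF, if_pos ht]; exact hbd t ht
      · simp only [hF, if_neg ht]; simp
    infer_instance
  · change F t = f t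
    simp only [hF, if_pos ht]

lemma rt_K {K h : ℝ → ℝ → ℝ} {g : ℝ → ℝ} {γ H H₀ H₁ G₀ G₁ k : ℝ}
    (hK : KernelAssumptionA K h g γ H H₀ H₁ G₀ G₁ k) :
    ∃ Kt : ℝ × ℝ → ℝ, Measurable Kt ∧
      (∀ p : ℝ × ℝ, 0 < p.1 → 0 < p.2 → Kt p = K p.1 p.2) ∧
      (∀ p : ℝ × ℝ, 0 < p.1 → 0 < p.2 → 0 ≤ Kt p) ∧
      (∀ p : ℝ × ℝ, 0 < p.1 → 0 < p.2 → Kt p ≤ H₁ * G₁ * (p.1 ^ γ + p.2 ^ γ)) := by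
  classical
  have hx : ∀ p : ℝ × ℝ, 0 < p.1 → 0 < p.2 → p.1 / (p.1 + p.2) ∈ Icc (0:ℝ) 1 := by
    intro p h1 h2
    refine ⟨by positivity, ?_⟩
    rw [div_le_one (by positivity)]; linarith
  set S : Set (ℝ × ℝ) := Ioi 0 ×ˢ Ioi 0 with hS
  have hSm : MeasurableSet S := measurableSet_Ioi.prod measurableSet_Ioi
  have hcont : ContinuousOn (fun p : ℝ × ℝ => h p.1 p.2 * g (p.1 / (p.1 + p.2))) S := by
    refine ContinuousOn.mul (hK.h_cont.mono ?_) (hK.g_cont.comp (t := Icc 0 1) ?_ ?_)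
    · exact prod_mono Ioi_subset_Ici_self Ioi_subset_Ici_self
    · refine ContinuousOn.div (by fun_prop) (by fun_prop) ?_
      rintro p ⟨h1, h2⟩
      have h1' : 0 < p.1 := h1
      have h2' : 0 < p.2 := h2
      positivity
    · rintro p ⟨h1, h2⟩
      exact hx p h1 h2
  have hKt : ∀ p : ℝ × ℝ, 0 < p.1 → 0 < p.2 →
      S.indicator (fun p : ℝ × ℝ => h p.1 p.2 * g (p.1 / (p.1 + p.2))) p = K p.1 p.2 := by
    intro p h1 h2
    rw [indicator_of_mem (show p ∈ S from ⟨h1, h2⟩), hK.K_eq _ _ h1.le h2.le (by positivity)]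
  refine ⟨S.indicator (fun p : ℝ × ℝ => h p.1 p.2 * g (p.1 / (p.1 + p.2))), ?_, hKt, ?_, ?_⟩
  · rw [← Set.piecewise_eq_indicator]
    exact hcont.measurable_piecewise continuousOn_const hSm
  · intro p h1 h2
    rw [hKt p h1 h2]; exact hK.K_nonneg _ _ h1.le h2.le
  · intro p h1 h2
    rw [indicator_of_mem (show p ∈ S from ⟨h1, h2⟩)]
    have hg := hK.g_upper _ (hx p h1 h2)
    have hg0 : 0 ≤ g (p.1 / (p.1 + p.2)) := by
      refine le_trans ?_ (hK.g_lower _ (hx p h1 h2))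
      have := hK.G₀_pos
      positivity
    have hh := hK.h_upper _ _ h1.le h2.le
    have hH := hK.H₁_pos
    have hn : 0 ≤ H₁ * (p.1 ^ γ + p.2 ^ γ) := by positivity
    calc h p.1 p.2 * g (p.1 / (p.1 + p.2)) ≤ (H₁ * (p.1 ^ γ + p.2 ^ γ)) * G₁ :=
          mul_le_mul hh hg hg0 hn
      _ = _ := by ring

lemma rt_prod_ae {μ : Measure ℝ} [SFinite μ] (h0 : μ (Iic 0) = 0) :
    ∀ᵐ p ∂(μ.prod μ), 0 < p.1 ∧ 0 < p.2 := by
  have ha : ∀ᵐ p ∂(μ.prod μ), 0 < p.1 := Measure.quasiMeasurePreserving_fst.ae (rt_ae_pos h0)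
  have hb : ∀ᵐ p ∂(μ.prod μ), 0 < p.2 := Measure.quasiMeasurePreserving_snd.ae (rt_ae_pos h0)
  filter_upwards [ha, hb] with p h1 h2 using ⟨h1, h2⟩

lemma rt_int {γ A C : ℝ} {μ : Measure ℝ} [IsFiniteMeasure μ] (h0 : μ (Iic 0) = 0)
    (hi : Integrable (fun v => 1 + v ^ γ) μ) (hC : (∫ v, (1 + v ^ γ) ∂μ) ≤ C)
    (hA : 0 ≤ A) :
    Integrable (fun p : ℝ × ℝ => A * ((1 + p.1 ^ γ) * (1 + p.2 ^ γ))) (μ.prod μ) ∧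
    ∀ {G : ℝ × ℝ → ℝ}, Measurable G →
    (∀ p : ℝ × ℝ, 0 < p.1 → 0 < p.2 → |G p| ≤ A * (p.1 ^ γ + p.2 ^ γ)) →
    (∀ᵐ p ∂(μ.prod μ), ‖G p‖ ≤ A * ((1 + p.1 ^ γ) * (1 + p.2 ^ γ))) ∧
    Integrable G (μ.prod μ) ∧ |∫ p, G p ∂(μ.prod μ)| ≤ A * (C * C) := by
  have hbi : Integrable (fun p : ℝ × ℝ => A * ((1 + p.1 ^ γ) * (1 + p.2 ^ γ))) (μ.prod μ) :=
    (hi.mul_prod hi).const_mul A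
  refine ⟨hbi, ?_⟩
  intro G hG hb
  have hae : ∀ᵐ p ∂(μ.prod μ), ‖G p‖ ≤ A * ((1 + p.1 ^ γ) * (1 + p.2 ^ γ)) := by
    filter_upwards [rt_prod_ae h0] with p hp
    refine (hb p hp.1 hp.2).trans (mul_le_mul_of_nonneg_left ?_ hA)
    have h1 := Real.rpow_nonneg hp.1.le γ
    have h2 := Real.rpow_nonneg hp.2.le γ
    nlinarith [mul_nonneg h1 h2]
  refine ⟨hae, hbi.mono' hG.aestronglyMeasurable hae, ?_⟩
  have hn : 0 ≤ ∫ v, (1 + v ^ γ) ∂μ := by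
    apply integral_nonneg_of_ae
    filter_upwards [rt_ae_pos h0] with v hv
    have := Real.rpow_nonneg hv.le γ
    simp only [Pi.zero_apply]; linarith
  calc |∫ p, G p ∂(μ.prod μ)| ≤ ∫ p : ℝ × ℝ, A * ((1 + p.1 ^ γ) * (1 + p.2 ^ γ)) ∂(μ.prod μ) :=
        norm_integral_le_of_norm_le hbi hae
    _ = A * ((∫ v, (1 + v ^ γ) ∂μ) * (∫ v, (1 + v ^ γ) ∂μ)) := by
        rw [integral_const_mul, integral_prod_mul (fun v : ℝ => 1 + v ^ γ) (fun v : ℝ => 1 + v ^ γ)]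
    _ ≤ A * (C * C) :=
        mul_le_mul_of_nonneg_left (mul_le_mul hC hC hn (hn.trans hC)) hA

/-- Cutoff functions. -/
def rtChi (n : ℕ) (v : ℝ) : ℝ := max 0 (min 1 (min (n * v - 1) (n - v)))

lemma rtChi_cont (n : ℕ) : Continuous (rtChi n) := by unfold rtChi; fun_prop

lemma rtChi_nonneg (n : ℕ) (v : ℝ) : 0 ≤ rtChi n v := le_max_left _ _

lemma rtChi_le (n : ℕ) (v : ℝ) : rtChi n v ≤ 1 :=
  max_le zero_le_one (min_le_left _ _)

lemma rtChi_supp (n : ℕ) (ζ : ℝ → ℝ) :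
    tsupport (fun v => ζ v * rtChi n v) ⊆ Icc (1 / (n : ℝ)) n := by
  refine closure_minimal ?_ isClosed_Icc
  intro v hv
  have hne : rtChi n v ≠ 0 := by
    intro h; apply hv; simp [h]
  have hpos : 0 < rtChi n v := lt_of_le_of_ne (rtChi_nonneg n v) hne.symm
  unfold rtChi at hpos
  rw [lt_max_iff] at hpos
  rcases hpos with h | h
  · exact absurd h (lt_irrefl _)
  · rw [lt_min_iff, lt_min_iff] at h
    obtain ⟨_, h1, h2⟩ := h
    have hn : (0:ℝ) < n := by
      rcases Nat.eq_zero_or_pos n with h0 | h0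
      · subst h0; simp at h1; linarith
      · exact_mod_cast h0
    constructor
    · rw [div_le_iff₀ hn]; linarith
    · linarith

lemma rtChi_tendsto {v : ℝ} (hv : 0 < v) :
    Tendsto (fun n => rtChi n v) atTop (nhds 1) := by
  refine tendsto_const_nhds.congr' ?_
  obtain ⟨N, hN⟩ := exists_nat_ge (2 / v)
  obtain ⟨N', hN'⟩ := exists_nat_ge (v + 1)
  filter_upwards [eventually_ge_atTop N, eventually_ge_atTop N'] with n h1 h2
  have h1' : (N : ℝ) ≤ n := by exact_mod_cast h1
  have h2' : (N' : ℝ) ≤ n := by exact_mod_cast h2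
  have h3 : 2 ≤ n * v := by
    rw [← div_le_iff₀ hv]; linarith
  unfold rtChi
  rw [min_eq_left, max_eq_right zero_le_one]
  exact le_min (by linarith) (by linarith)

lemma rt_weak {K h : ℝ → ℝ → ℝ} {g : ℝ → ℝ} {γ H H₀ H₁ G₀ G₁ k : ℝ}
    (hK : KernelAssumptionA K h g γ H H₀ H₁ G₀ G₁ k)
    {T : ℝ} (hT : 0 ≤ T) {fin : Measure ℝ} (hconc : fin (Iic 0) = 0)
    (hγmom : Integrable (fun v => 1 + v ^ γ) fin)
    {f : ℝ → Measure ℝ} (hf : IsWeakSolution K γ T f fin)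
    {Kt : ℝ × ℝ → ℝ} (hKm : Measurable Kt)
    (hKe : ∀ p : ℝ × ℝ, 0 < p.1 → 0 < p.2 → Kt p = K p.1 p.2)
    (hK0 : ∀ p : ℝ × ℝ, 0 < p.1 → 0 < p.2 → 0 ≤ Kt p)
    (hK1 : ∀ p : ℝ × ℝ, 0 < p.1 → 0 < p.2 → Kt p ≤ H₁ * G₁ * (p.1 ^ γ + p.2 ^ γ))
    (ζ : ℝ → ℝ) (hζ : Continuous ζ) (Z : ℝ) (hZ : ∀ v, |ζ v| ≤ Z) :
    (∀ s ∈ Icc 0 T, Integrable (fun p : ℝ × ℝ => Kt p * (ζ (p.1 + p.2) - ζ p.1 - ζ p.2))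
      ((f s).prod (f s))) ∧
    IntervalIntegrable (fun s => ∫ p, Kt p * (ζ (p.1 + p.2) - ζ p.1 - ζ p.2) ∂((f s).prod (f s)))
      volume 0 T ∧
    ∀ t ∈ Icc (0 : ℝ) T, (∫ v, ζ v ∂(f t)) - (∫ v, ζ v ∂fin) =
        (1 / 2) * ∫ s in (0 : ℝ)..t,
          ∫ p, Kt p * (ζ (p.1 + p.2) - ζ p.1 - ζ p.2) ∂((f s).prod (f s)) := by
  obtain ⟨C, hC⟩ := hf.moment_bound
  have hfin : ∀ t ∈ Icc (0 : ℝ) T, IsFiniteMeasure (f t) := fun t ht =>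
    rt_finite (hf.conc t ht) (hC t ht).1
  have hfin0 : IsFiniteMeasure fin := rt_finite hconc hγmom
  have hbd : ∀ t ∈ Icc (0 : ℝ) T, f t univ ≤ ENNReal.ofReal C := by
    intro t ht
    have := hfin t ht
    rw [← ofReal_measureReal]
    apply ENNReal.ofReal_le_ofReal
    refine le_trans ?_ (hC t ht).2
    have h1 : (f t).real univ = ∫ v, (1:ℝ) ∂(f t) := by simp
    rw [h1]
    refine integral_mono_ae (integrable_const _) (hC t ht).1 ?_
    filter_upwards [rt_ae_pos (hf.conc t ht)] with v hv
    have := Real.rpow_nonneg hv.le γ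
    linarith
  obtain ⟨κ, hκs, hκ⟩ := rt_kernel f T _ ENNReal.ofReal_lt_top hbd hfin hf.time_cont
  have hmeas : ∀ G : ℝ × ℝ → ℝ, Measurable G →
      StronglyMeasurable (fun s => ∫ p, G p ∂((κ s).prod (κ s))) := by
    intro G hG
    have := StronglyMeasurable.integral_kernel (κ := ProbabilityTheory.Kernel.prod κ κ)
      hG.stronglyMeasurable
    simpa only [ProbabilityTheory.Kernel.prod_apply] using this
  have hZ0 : 0 ≤ Z := (abs_nonneg _).trans (hZ 0)
  set A : ℝ := H₁ * G₁ * (3 * Z) with hA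
  have hA0 : 0 ≤ A := by
    have := hK.H₁_pos; have := hK.G₁_pos
    positivity
  -- generic bound
  have hgb : ∀ ψ : ℝ → ℝ, (∀ v, |ψ v| ≤ Z) → ∀ p : ℝ × ℝ, 0 < p.1 → 0 < p.2 →
      |Kt p * (ψ (p.1 + p.2) - ψ p.1 - ψ p.2)| ≤ A * (p.1 ^ γ + p.2 ^ γ) := by
    intro ψ hψ p h1 h2
    rw [abs_mul, abs_of_nonneg (hK0 p h1 h2)]
    have h3 : |ψ (p.1 + p.2) - ψ p.1 - ψ p.2| ≤ 3 * Z := by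
      have a1 := abs_le.1 (hψ (p.1 + p.2))
      have a2 := abs_le.1 (hψ p.1)
      have a3 := abs_le.1 (hψ p.2)
      rw [abs_le]; constructor <;> linarith [a1.1, a1.2, a2.1, a2.2, a3.1, a3.2]
    calc _ ≤ (H₁ * G₁ * (p.1 ^ γ + p.2 ^ γ)) * (3 * Z) :=
          mul_le_mul (hK1 p h1 h2) h3 (abs_nonneg _) ((hK0 p h1 h2).trans (hK1 p h1 h2))
      _ = _ := by rw [hA]; ring
  have hgm : ∀ ψ : ℝ → ℝ, Continuous ψ →
      Measurable (fun p : ℝ × ℝ => Kt p * (ψ (p.1 + p.2) - ψ p.1 - ψ p.2)) := by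
    intro ψ hψ
    refine hKm.mul (Continuous.measurable ?_)
    fun_prop
  have hall : ∀ s ∈ Icc (0:ℝ) T, ∀ ψ : ℝ → ℝ, Continuous ψ → (∀ v, |ψ v| ≤ Z) →
      (∀ᵐ p ∂((f s).prod (f s)), ‖Kt p * (ψ (p.1 + p.2) - ψ p.1 - ψ p.2)‖ ≤
        A * ((1 + p.1 ^ γ) * (1 + p.2 ^ γ))) ∧
      Integrable (fun p : ℝ × ℝ => Kt p * (ψ (p.1 + p.2) - ψ p.1 - ψ p.2)) ((f s).prod (f s)) ∧
      |∫ p, Kt p * (ψ (p.1 + p.2) - ψ p.1 - ψ p.2) ∂((f s).prod (f s))| ≤ A * (C * C) := by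
    intro s hs ψ hψ hψb
    have := hfin s hs
    exact (rt_int (hf.conc s hs) (hC s hs).1 (hC s hs).2 hA0).2 (hgm ψ hψ) (hgb ψ hψb)
  -- time measurability
  have htm : ∀ ψ : ℝ → ℝ, Continuous ψ → ∀ t ∈ Icc (0:ℝ) T,
      AEStronglyMeasurable
        (fun s => ∫ p, Kt p * (ψ (p.1 + p.2) - ψ p.1 - ψ p.2) ∂((f s).prod (f s)))
        (volume.restrict (uIoc 0 t)) := by
    intro ψ hψ t ht
    refine (hmeas _ (hgm ψ hψ)).aestronglyMeasurable.congr ?_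
    filter_upwards [ae_restrict_mem measurableSet_uIoc] with s hs
    rw [uIoc_of_le ht.1] at hs
    rw [hκ s ⟨hs.1.le, hs.2.trans ht.2⟩]
  refine ⟨fun s hs => (hall s hs ζ hζ hZ).2.1, ?_, ?_⟩
  · have : IntervalIntegrable (fun _ : ℝ => A * (C * C)) volume 0 T :=
      intervalIntegrable_const
    refine this.mono_fun' (htm ζ hζ T ⟨hT, le_rfl⟩) ?_
    filter_upwards [ae_restrict_mem measurableSet_uIoc] with s hs
    rw [uIoc_of_le hT] at hs
    exact (hall s ⟨hs.1.le, hs.2⟩ ζ hζ hZ).2.2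
  intro t ht
  set ζn : ℕ → ℝ → ℝ := fun n v => ζ v * rtChi n v with hζn
  have hζnc : ∀ n, Continuous (ζn n) := fun n => hζ.mul (rtChi_cont n)
  have hζnb : ∀ n v, |ζn n v| ≤ Z := by
    intro n v
    simp only [hζn]
    rw [abs_mul, abs_of_nonneg (rtChi_nonneg n v)]
    calc |ζ v| * rtChi n v ≤ Z * 1 :=
          mul_le_mul (hZ v) (rtChi_le n v) (rtChi_nonneg n v) hZ0
      _ = Z := mul_one Z
  have hζnt : ∀ v, 0 < v → Tendsto (fun n => ζn n v) atTop (nhds (ζ v)) := by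
    intro v hv
    simpa using (rtChi_tendsto hv).const_mul (ζ v)
  have hlim : ∀ μ : Measure ℝ, IsFiniteMeasure μ → μ (Iic 0) = 0 →
      Tendsto (fun n => ∫ v, ζn n v ∂μ) atTop (nhds (∫ v, ζ v ∂μ)) := by
    intro μ hμ h0
    refine tendsto_integral_of_dominated_convergence (fun _ => Z)
      (fun n => (hζnc n).aestronglyMeasurable) (integrable_const _)
      (fun n => Eventually.of_forall (hζnb n)) ?_
    filter_upwards [rt_ae_pos h0] with v hv using hζnt v hv
  have hw : ∀ n, (∫ v, ζn n v ∂(f t)) - (∫ v, ζn n v ∂fin) =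
      (1 / 2) * ∫ s in (0 : ℝ)..t,
          ∫ p, Kt p * (ζn n (p.1 + p.2) - ζn n p.1 - ζn n p.2) ∂((f s).prod (f s)) := by
    intro n
    have hsupp := rtChi_supp n ζ
    rw [hf.weak_form (ζn n) (hζnc n) (HasCompactSupport.of_support_subset_isCompact isCompact_Icc
      ((subset_tsupport _).trans hsupp)) ?_ t ht]
    · congr 1
      refine intervalIntegral.integral_congr ?_
      intro s hs
      rw [uIcc_of_le ht.1] at hs
      have hs' : s ∈ Icc (0:ℝ) T := ⟨hs.1, hs.2.trans ht.2⟩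
      have := hfin s hs'
      beta_reduce
      rw [integral_prod _ (hall s hs' (ζn n) (hζnc n) (hζnb n)).2.1]
      refine integral_congr_ae ?_
      filter_upwards [rt_ae_pos (hf.conc s hs')] with v hv
      refine integral_congr_ae ?_
      filter_upwards [rt_ae_pos (hf.conc s hs')] with v' hv'
      rw [hKe (v, v') hv hv']
    · rcases Nat.eq_zero_or_pos n with h0 | h0
      · subst h0
        have : ζn 0 = 0 := by
          ext v
          have : rtChi 0 v = 0 := by
            unfold rtChi
            simp only [Nat.cast_zero, zero_mul, zero_sub]
            apply max_eq_left
            exact (min_le_right _ _).trans ((min_le_left _ _).trans (by norm_num))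
          simp [hζn, this]
        rw [this]; simp
      · refine hsupp.trans ?_
        intro v hv
        have : (0:ℝ) < 1 / n := by positivity
        exact lt_of_lt_of_le this hv.1
  have hR : Tendsto (fun n => (1 / 2 : ℝ) * ∫ s in (0 : ℝ)..t,
          ∫ p, Kt p * (ζn n (p.1 + p.2) - ζn n p.1 - ζn n p.2) ∂((f s).prod (f s))) atTop
      (nhds ((1 / 2 : ℝ) * ∫ s in (0 : ℝ)..t,
          ∫ p, Kt p * (ζ (p.1 + p.2) - ζ p.1 - ζ p.2) ∂((f s).prod (f s)))) := by
    refine Tendsto.const_mul _ ?_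
    refine intervalIntegral.tendsto_integral_filter_of_dominated_convergence
      (fun _ => A * (C * C)) (Eventually.of_forall fun n => htm _ (hζnc n) t ht) ?_
      intervalIntegrable_const ?_
    · refine Eventually.of_forall fun n => Eventually.of_forall fun s hs => ?_
      rw [uIoc_of_le ht.1] at hs
      exact (hall s ⟨hs.1.le, hs.2.trans ht.2⟩ _ (hζnc n) (hζnb n)).2.2
    · refine Eventually.of_forall fun s hs => ?_
      rw [uIoc_of_le ht.1] at hs
      have hs' : s ∈ Icc (0:ℝ) T := ⟨hs.1.le, hs.2.trans ht.2⟩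
      have := hfin s hs'
      refine tendsto_integral_of_dominated_convergence
        (fun p : ℝ × ℝ => A * ((1 + p.1 ^ γ) * (1 + p.2 ^ γ)))
        (fun n => (hgm _ (hζnc n)).aestronglyMeasurable)
        (rt_int (hf.conc s hs') (hC s hs').1 (hC s hs').2 hA0).1
        (fun n => (hall s hs' _ (hζnc n) (hζnb n)).1) ?_
      filter_upwards [rt_prod_ae (hf.conc s hs')] with p hp
      refine Tendsto.const_mul _ ?_
      exact ((hζnt _ (add_pos hp.1 hp.2)).sub (hζnt _ hp.1)).sub (hζnt _ hp.2)
  have hL := (hlim (f t) (hfin t ht) (hf.conc t ht)).sub (hlim fin hfin0 hconc)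
  refine tendsto_nhds_unique hL ?_
  simpa only [hw] using hR

/-- Truncated tail moment test function. -/
def rtPhi (R N m v : ℝ) : ℝ := max (v - R) 0 * (min (max (v - R) 0) N) ^ (m - 1)

lemma rtPhi_cont {R N m : ℝ} (hm : 1 < m) : Continuous (rtPhi R N m) := by
  unfold rtPhi
  refine Continuous.mul (by fun_prop) ?_
  refine Continuous.rpow_const (by fun_prop) ?_
  intro v; right; linarith

lemma rtPhi_nonneg {R N m : ℝ} (hN : 0 ≤ N) (v : ℝ) : 0 ≤ rtPhi R N m v := by
  unfold rtPhi
  have : 0 ≤ min (max (v - R) 0) N := le_min (le_max_right _ _) hN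
  have : 0 ≤ max (v - R) 0 := le_max_right _ _
  positivity

lemma rtPhi_le {R N m : ℝ} (hN : 0 ≤ N) (hm : 1 < m) (v : ℝ) :
    rtPhi R N m v ≤ max (v - R) 0 * N ^ (m - 1) := by
  unfold rtPhi
  have h1 : 0 ≤ min (max (v - R) 0) N := le_min (le_max_right _ _) hN
  have h2 : 0 ≤ max (v - R) 0 := le_max_right _ _
  exact mul_le_mul_of_nonneg_left
    (Real.rpow_le_rpow h1 (min_le_right _ _) (by linarith)) h2

lemma rtPhi_superadd {R N m : ℝ} (hN : 0 ≤ N) (hm : 1 < m) (hR : 0 ≤ R) {v v' : ℝ}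
    (hv : 0 ≤ v) (hv' : 0 ≤ v') :
    0 ≤ rtPhi R N m (v + v') - rtPhi R N m v - rtPhi R N m v' := by
  unfold rtPhi
  set w := max (v - R) 0
  set w' := max (v' - R) 0
  set u := max (v + v' - R) 0
  have hw : 0 ≤ w := le_max_right _ _
  have hw' : 0 ≤ w' := le_max_right _ _
  have hwu : w + w' ≤ u := by
    simp only [w, w', u]
    rcases le_total (v - R) 0 with h1 | h1 <;> rcases le_total (v' - R) 0 with h2 | h2 <;>
      simp only [max_eq_left, max_eq_right, h1, h2]
    · simp
    · exact le_max_of_le_left (by linarith)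
    · exact le_max_of_le_left (by linarith)
    · exact le_max_of_le_left (by linarith)
  have hm' : 0 ≤ m - 1 := by linarith
  have e1 : (min w N) ^ (m - 1) ≤ (min u N) ^ (m - 1) :=
    Real.rpow_le_rpow (le_min hw hN) (min_le_min_right _ (by linarith)) hm'
  have e2 : (min w' N) ^ (m - 1) ≤ (min u N) ^ (m - 1) :=
    Real.rpow_le_rpow (le_min hw' hN) (min_le_min_right _ (by linarith)) hm'
  have e3 : 0 ≤ (min u N) ^ (m - 1) := Real.rpow_nonneg (le_min (by linarith) hN) _
  nlinarith [mul_le_mul_of_nonneg_left e1 hw, mul_le_mul_of_nonneg_left e2 hw',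
    mul_le_mul_of_nonneg_right hwu e3]

lemma rt_bernoulli {m w u : ℝ} (hm : 1 < m) (hw : 0 ≤ w) (hu : 0 ≤ u) :
    w ^ (m - 1) * w + m * w ^ (m - 1) * u ≤ (w + u) ^ (m - 1) * (w + u) := by
  rcases hw.eq_or_lt with h | h
  · subst h
    rw [Real.zero_rpow (by linarith)]
    simp only [zero_mul, mul_zero, zero_add]; positivity
  · have hb := one_add_mul_self_le_rpow_one_add (s := u / w) (by have := div_nonneg hu hw; linarith)
      hm.le
    have h1 : (w + u) ^ (m - 1) * (w + u) = (w + u) ^ m := by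
      rw [← Real.rpow_add_one (by positivity)]; ring_nf
    have h2 : w ^ (m - 1) * w = w ^ m := by
      rw [← Real.rpow_add_one (by positivity)]; ring_nf
    have h3 : (w + u) ^ m = w ^ m * (1 + u / w) ^ m := by
      rw [← Real.mul_rpow hw (by positivity)]
      congr 1; field_simp
    have h4 : m * w ^ (m - 1) * u = w ^ m * (m * (u / w)) := by
      rw [← h2]; field_simp
    rw [h1, h3, h2, h4]
    have := mul_le_mul_of_nonneg_left hb (Real.rpow_nonneg hw m)
    linarith

lemma rt_K_lower {K h : ℝ → ℝ → ℝ} {g : ℝ → ℝ} {γ H H₀ H₁ G₀ G₁ k : ℝ}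
    (hK : KernelAssumptionA K h g γ H H₀ H₁ G₀ G₁ k) {v v' : ℝ} (hv' : 0 < v')
    (hvv : 3 * v' ≤ v) (hH : H < v) :
    H₀ * G₀ * (1 / 4) ^ k * v ^ γ ≤ K v v' := by
  have hv : 0 < v := by linarith
  have hs : 0 < v + v' := by linarith
  rw [hK.K_eq v v' hv.le hv'.le hs]
  have hx : 3 / 4 ≤ v / (v + v') := by
    rw [le_div_iff₀ hs]; linarith
  have hx1 : v / (v + v') ≤ 1 := by
    rw [div_le_one hs]; linarith
  have h1 : (1 / 4 : ℝ) ^ k ≤ |v / (v + v') - 1 / 2| ^ k := by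
    refine Real.rpow_le_rpow (by norm_num) ?_ (by linarith [hK.k_ge_one])
    exact le_trans (by linarith) (le_abs_self _)
  have hg := hK.g_lower _ ⟨by linarith, hx1⟩
  have hh := hK.h_lower v v' hv.le hv'.le (by linarith)
  have hG := hK.G₀_pos
  have hH0 := hK.H₀_pos
  have e1 : G₀ * (1 / 4 : ℝ) ^ k ≤ g (v / (v + v')) :=
    (mul_le_mul_of_nonneg_left h1 hG.le).trans hg
  have e2 : H₀ * v ^ γ ≤ h v v' := by
    refine le_trans (mul_le_mul_of_nonneg_left ?_ hH0.le) hh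
    have := Real.rpow_nonneg hv'.le γ
    linarith
  have e3 : 0 ≤ H₀ * v ^ γ := by positivity
  have e4 : 0 ≤ G₀ * (1 / 4 : ℝ) ^ k := by positivity
  calc _ = (H₀ * v ^ γ) * (G₀ * (1 / 4 : ℝ) ^ k) := by ring
    _ ≤ _ := mul_le_mul e2 e1 e4 (e3.trans e2)

lemma rt_point {c γ m R N L lam Kv v v' : ℝ} (hγ : 1 < γ) (hm : 2 < m) (hc : 0 < c)
    (hR : 0 < R) (hLR : L ≤ R) (hLN : L ≤ N / 2) (hN : 0 < N) (hlam : 0 ≤ lam)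
    (hv : 0 < v) (hv' : 0 < v') (hK0 : 0 ≤ Kv)
    (hK : R ≤ v → v' ≤ L → c * v ^ γ ≤ Kv) :
    c * min (m * lam ^ ((γ - 1) / (m - 1))) ((N / 2) ^ (γ - 1)) *
      ((rtPhi R N m v - lam * max (v - R) 0) * (if v' ≤ L then v' else 0)) ≤
      Kv * (rtPhi R N m (v + v') - rtPhi R N m v - rtPhi R N m v') := by
  have hsup := rtPhi_superadd (R := R) (N := N) (m := m) hN.le (by linarith) hR.le hv.le hv'.le
  have hnn := mul_nonneg hK0 hsup
  by_cases hL : v' ≤ L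
  swap
  · simpa [hL] using hnn
  rw [if_pos hL]
  by_cases hRv : v < R
  · have : max (v - R) 0 = 0 := max_eq_right (by linarith)
    have e : rtPhi R N m v = 0 := by unfold rtPhi; rw [this]; simp
    rw [this, e]
    rw [e] at hnn
    simpa using hnn
  push Not at hRv
  have hKl := hK hRv hL
  set θ := min (m * lam ^ ((γ - 1) / (m - 1))) ((N / 2) ^ (γ - 1)) with hθ
  have hθ0 : 0 ≤ θ := le_min (by positivity) (by positivity)
  obtain ⟨w, rfl⟩ : ∃ w, v = w + R := ⟨v - R, by ring⟩
  have hw : 0 ≤ w := by linarith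
  have e0 : rtPhi R N m v' = 0 := by
    unfold rtPhi
    rw [max_eq_right (show v' - R ≤ 0 by linarith)]; simp
  have e1 : rtPhi R N m (w + R) = w * (min w N) ^ (m - 1) := by
    unfold rtPhi
    rw [add_sub_cancel_right, max_eq_left hw]
  have e2 : rtPhi R N m (w + R + v') = (w + v') * (min (w + v') N) ^ (m - 1) := by
    unfold rtPhi
    rw [show w + R + v' - R = w + v' by ring, max_eq_left (by linarith)]
  have e3 : max (w + R - R) 0 = w := by rw [add_sub_cancel_right, max_eq_left hw]
  rw [e0] at hnn ⊢
  rw [e3]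
  set b := (min w N) ^ (m - 1) with hb
  have hb0 : 0 ≤ b := Real.rpow_nonneg (le_min hw hN.le) _
  have hγv : w * w ^ (γ - 1) ≤ (w + R) ^ γ := by
    have : w * w ^ (γ - 1) ≤ w ^ γ := by
      rcases hw.eq_or_lt with h | h
      · rw [← h]; simp [Real.zero_rpow (show γ ≠ 0 by linarith)]
      · rw [mul_comm, ← Real.rpow_add_one h.ne']; ring_nf; exact le_rfl
    exact this.trans (Real.rpow_le_rpow hw (by linarith) (by linarith))
  by_cases hbl : b ≤ lam
  · -- right-hand side is nonpositive
    refine le_trans ?_ hnn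
    have h1 : (rtPhi R N m (w + R) - lam * w) ≤ 0 := by
      rw [e1]; nlinarith
    have h2 : (rtPhi R N m (w + R) - lam * w) * v' ≤ 0 := by nlinarith
    have h3 : 0 ≤ c * θ := by positivity
    nlinarith
  push Not at hbl
  -- key lower bound
  suffices hkey : ∃ d, 0 ≤ d ∧ d * v' ≤ rtPhi R N m (w + R + v') - rtPhi R N m (w + R) ∧
      w * θ * b ≤ (w + R) ^ γ * d by
    obtain ⟨d, hd0, hd1, hd2⟩ := hkey
    have hwR : 0 ≤ (w + R) ^ γ := by positivity
    calc c * θ * ((rtPhi R N m (w + R) - lam * w) * v')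
        = c * v' * (w * θ * (b - lam)) := by rw [e1]; ring
      _ ≤ c * v' * (w * θ * b) := by
          apply mul_le_mul_of_nonneg_left _ (by positivity)
          exact mul_le_mul_of_nonneg_left (by linarith) (by positivity)
      _ ≤ c * v' * ((w + R) ^ γ * d) := mul_le_mul_of_nonneg_left hd2 (by positivity)
      _ = (c * (w + R) ^ γ) * (d * v') := by ring
      _ ≤ Kv * (d * v') := mul_le_mul_of_nonneg_right hKl (by positivity)
      _ ≤ Kv * (rtPhi R N m (w + R + v') - rtPhi R N m (w + R) - 0) := by
          rw [sub_zero]; exact mul_le_mul_of_nonneg_left hd1 hK0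
  by_cases hwN : w ≤ N / 2
  · have hminw : min w N = w := min_eq_left (by linarith)
    have hminu : min (w + v') N = w + v' := min_eq_left (by linarith)
    refine ⟨m * b, by positivity, ?_, ?_⟩
    · rw [e1, e2, hminu]
      rw [hminw] at hb
      have := rt_bernoulli (m := m) (by linarith) hw hv'.le
      rw [← hb] at this
      linarith
    · have hpow : lam ^ ((γ - 1) / (m - 1)) ≤ w ^ (γ - 1) := by
        have h1 : lam ^ ((γ - 1) / (m - 1)) ≤ b ^ ((γ - 1) / (m - 1)) :=
          Real.rpow_le_rpow hlam hbl.le (div_nonneg (by linarith) (by linarith))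
        refine h1.trans (le_of_eq ?_)
        rw [hb, hminw, ← Real.rpow_mul hw]
        congr 1
        field_simp [show m - 1 ≠ 0 by linarith]
      calc w * θ * b ≤ w * (m * lam ^ ((γ - 1) / (m - 1))) * b := by
            gcongr; exact min_le_left _ _
        _ ≤ w * (m * w ^ (γ - 1)) * b := by gcongr
        _ = (w * w ^ (γ - 1)) * (m * b) := by ring
        _ ≤ _ := mul_le_mul_of_nonneg_right hγv (by positivity)
  · push Not at hwN
    refine ⟨b, hb0, ?_, ?_⟩
    · rw [e1, e2]
      have : b ≤ (min (w + v') N) ^ (m - 1) :=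
        Real.rpow_le_rpow (le_min hw hN.le) (min_le_min_right _ (by linarith)) (by linarith)
      nlinarith [mul_le_mul_of_nonneg_left this (show 0 ≤ w + v' by linarith)]
    · have : (N / 2) ^ (γ - 1) ≤ w ^ (γ - 1) :=
        Real.rpow_le_rpow (by positivity) hwN.le (by linarith)
      calc w * θ * b ≤ w * (w ^ (γ - 1)) * b := by
            gcongr; exact (min_le_right _ _).trans this
        _ ≤ _ := mul_le_mul_of_nonneg_right hγv hb0

/-- Discrete comparison argument. -/
lemma rt_ode {F : ℝ → ℝ} {t T T' c m α W B P : ℝ} (hT : T < T')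
    (hc : 0 < c) (hm : 0 < m) (hα : 0 < α) (hW : 0 < W) (hB : 0 < B)
    (hF : ∀ a b, t ≤ a → a ≤ b → b ≤ T' →
      (b - a) * (c * (F a * min (m * (F a / W) ^ α) B)) ≤ F b - F a)
    (hF0 : ∀ a, 0 ≤ F a) (hx : 0 < F t) (hP : F T' ≤ P)
    (hS : t + (F t) ^ (-α) * (W ^ α / (c * m * (1 - 2 ^ (-α)))) ≤ T) :
    W * (B / m) ^ (1 / α) * ((T' - T) * (c * B)) ≤ P := by
  set x := F t with hxdef
  set y := W * (B / m) ^ (1 / α) with hy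
  have hy0 : 0 < y := by positivity
  have hq1 : (2:ℝ) ^ (-α) < 1 := Real.rpow_lt_one_of_one_lt_of_neg (by norm_num) (by linarith)
  have hq0 : 0 < (2:ℝ) ^ (-α) := by positivity
  set q := (2:ℝ) ^ (-α) with hq
  set d := x ^ (-α) * (W ^ α / (c * m)) with hd
  have hd0 : 0 < d := by positivity
  set S : ℕ → ℝ := fun j => d * ∑ i ∈ Finset.range j, q ^ i with hSdef
  have hSle : ∀ j, t + S j ≤ T := by
    intro j
    refine le_trans ?_ hS
    have h1 : ∑ i ∈ Finset.range j, q ^ i ≤ (1 - q)⁻¹ := by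
      rw [← tsum_geometric_of_lt_one hq0.le hq1]
      exact Summable.sum_le_tsum _ (fun i _ => by positivity)
        (summable_geometric_of_lt_one hq0.le hq1)
    have h2 : S j ≤ d * (1 - q)⁻¹ := mul_le_mul_of_nonneg_left h1 hd0.le
    have h3 : d * (1 - q)⁻¹ = x ^ (-α) * (W ^ α / (c * m * (1 - q))) := by
      rw [hd]; field_simp
    linarith
  have hS0 : ∀ j, 0 ≤ S j := fun j =>
    mul_nonneg hd0.le (Finset.sum_nonneg fun i _ => by positivity)
  have hSs : ∀ j, S (j + 1) = S j + d * q ^ j := by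
    intro j; simp only [hSdef, Finset.sum_range_succ]; ring
  have hmono : ∀ a b, t ≤ a → a ≤ b → b ≤ T' → F a ≤ F b := by
    intro a b h1 h2 h3
    have := hF a b h1 h2 h3
    have h4 : 0 ≤ (b - a) * (c * (F a * min (m * (F a / W) ^ α) B)) := by
      have := hF0 a
      have h5 : 0 ≤ min (m * (F a / W) ^ α) B := le_min (by positivity) hB.le
      have h6 : 0 ≤ b - a := by linarith
      positivity
    linarith
  have hcl : ∀ j : ℕ, min (2 ^ j * x) y ≤ F (t + S j) := by
    intro j
    induction j with
    | zero => simp [hSdef, ← hxdef]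
    | succ j ih =>
      have hle : t + S j ≤ t + S (j + 1) := by
        rw [hSs]; have : 0 ≤ d * q ^ j := by positivity
        linarith
      have ht1 : t ≤ t + S j := by linarith [hS0 j]
      have ht2 : t + S (j + 1) ≤ T' := (hSle _).trans hT.le
      have hm1 := hmono _ _ ht1 hle ht2
      rcases le_total y (F (t + S j)) with h | h
      · exact (min_le_right _ _).trans (h.trans hm1)
      · by_cases hyy : y ≤ 2 ^ j * x
        · rw [min_eq_right hyy] at ih
          exact (min_le_right _ _).trans (ih.trans hm1)
        push Not at hyy
        rw [min_eq_left hyy.le] at ih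
        refine (min_le_left _ _).trans ?_
        have hinc := hF _ _ ht1 hle ht2
        set u := F (t + S j) with hu
        set z := 2 ^ j * x with hz
        have hz0 : 0 < z := by positivity
        have hu0 : 0 < u := lt_of_lt_of_le hz0 ih
        have hmin : m * (z / W) ^ α ≤ min (m * (u / W) ^ α) B := by
          refine le_min ?_ ?_
          · gcongr
          · have h1 : (z / W) ^ α ≤ (y / W) ^ α := by gcongr
            have h2 : (y / W) ^ α = B / m := by
              rw [hy, mul_div_cancel_left₀ _ hW.ne', ← Real.rpow_mul (by positivity),
                one_div_mul_cancel hα.ne', Real.rpow_one]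
            rw [h2] at h1
            calc m * (z / W) ^ α ≤ m * (B / m) := by gcongr
              _ = B := by field_simp
        have hd1 : (t + S (j + 1) - (t + S j)) = d * q ^ j := by rw [hSs]; ring
        rw [hd1] at hinc
        have hlow : d * q ^ j * (c * (z * (m * (z / W) ^ α))) ≤
            d * q ^ j * (c * (u * min (m * (u / W) ^ α) B)) := by
          gcongr
        have heq : d * q ^ j * (c * (z * (m * (z / W) ^ α))) = z := by
          have h1 : z ^ α = ((2:ℝ) ^ α) ^ j * x ^ α := by
            rw [hz, Real.mul_rpow (by positivity) hx.le, ← Real.rpow_natCast, ← Real.rpow_natCast,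
              ← Real.rpow_mul (by norm_num), ← Real.rpow_mul (by norm_num), mul_comm α]
          have h2 : q = ((2:ℝ) ^ α)⁻¹ := by rw [hq, Real.rpow_neg (by norm_num)]
          rw [Real.div_rpow hz0.le hW.le, h1, hd, h2, Real.rpow_neg hx.le]
          have : 0 < (2:ℝ) ^ α := by positivity
          have : 0 < x ^ α := by positivity
          have : 0 < W ^ α := by positivity
          rw [inv_pow]
          field_simp
        have : (2:ℝ) ^ (j + 1) * x = z + z := by rw [hz, pow_succ]; ring
        rw [this]
        linarith
  obtain ⟨j, hj⟩ := pow_unbounded_of_one_lt (y / x) (show (1:ℝ) < 2 by norm_num)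
  have hjx : y ≤ 2 ^ j * x := by
    rw [div_lt_iff₀ hx] at hj; exact hj.le
  have hFy : y ≤ F (t + S j) := by
    have := hcl j; rwa [min_eq_right hjx] at this
  have hFT : y ≤ F T := hFy.trans (hmono _ _ (by linarith [hS0 j]) (hSle j) hT.le)
  have htT : t ≤ T := by linarith [hS0 j, hSle j]
  have hinc := hF T T' htT hT.le le_rfl
  have hmin : min (m * (F T / W) ^ α) B = B := by
    apply min_eq_right
    have h1 : (y / W) ^ α ≤ (F T / W) ^ α := by gcongr
    have h2 : (y / W) ^ α = B / m := by
      rw [hy, mul_div_cancel_left₀ _ hW.ne', ← Real.rpow_mul (by positivity),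
        one_div_mul_cancel hα.ne', Real.rpow_one]
    rw [h2] at h1
    calc B = m * (B / m) := by field_simp
      _ ≤ _ := by gcongr
  rw [hmin] at hinc
  have hTT : 0 ≤ (T' - T) * (c * B) := by
    have : 0 < T' - T := by linarith
    positivity
  have := mul_le_mul_of_nonneg_right hFT hTT
  have := hF0 T
  nlinarith

lemma rt_L {γ C v₀ : ℝ} (hγ : 1 < γ) (hv₀ : 0 < v₀) {T : ℝ} {f : ℝ → Measure ℝ}
    (h0 : ∀ t ∈ Icc (0 : ℝ) T, f t (Iic 0) = 0)
    (hC : ∀ t ∈ Icc (0 : ℝ) T,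
      Integrable (fun v => 1 + v ^ γ) (f t) ∧ (∫ v, (1 + v ^ γ) ∂(f t)) ≤ C)
    (hm : ∀ t ∈ Icc (0 : ℝ) T, Integrable (fun v => v) (f t) ∧ (∫ v, v ∂(f t)) = v₀) :
    ∃ L : ℝ, 0 < L ∧ ∀ t ∈ Icc (0 : ℝ) T,
      Integrable (fun v : ℝ => if v ≤ L then v else 0) (f t) ∧
      v₀ / 2 ≤ ∫ v, (if v ≤ L then v else 0) ∂(f t) := by
  have h1 : Tendsto (fun L : ℝ => L ^ (-(γ - 1)) * C) atTop (nhds (0 * C)) :=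
    (tendsto_rpow_neg_atTop (by linarith)).mul_const C
  rw [zero_mul] at h1
  obtain ⟨L, hL1, hL0⟩ := ((h1.eventually (gt_mem_nhds (show 0 < v₀ / 2 by linarith))).and
    (eventually_gt_atTop 0)).exists
  have hLn : 0 ≤ L ^ (-(γ - 1)) := by positivity
  refine ⟨L, hL0, fun t ht => ?_⟩
  obtain ⟨hi1, hi2⟩ := hC t ht
  obtain ⟨hm1, hm2⟩ := hm t ht
  have hpos := rt_ae_pos (h0 t ht)
  have hmeas : Measurable (fun v : ℝ => if v ≤ L then v else 0) :=
    Measurable.ite measurableSet_Iic measurable_id measurable_const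
  have hIntg : Integrable (fun v : ℝ => if v ≤ L then v else 0) (f t) := by
    refine hm1.mono' hmeas.aestronglyMeasurable ?_
    filter_upwards [hpos] with v hv
    split_ifs
    · simp [abs_of_pos hv]
    · simpa using hv.le
  refine ⟨hIntg, ?_⟩
  have h2 : ∫ v, (v - L ^ (-(γ - 1)) * (1 + v ^ γ)) ∂(f t) ≤
      ∫ v, (if v ≤ L then v else 0) ∂(f t) := by
    refine integral_mono_ae (hm1.sub (hi1.const_mul _)) hIntg ?_
    filter_upwards [hpos] with v hv
    have hvγ : 0 ≤ v ^ γ := by positivity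
    by_cases h : v ≤ L
    · simp only [if_pos h]
      nlinarith [mul_nonneg hLn hvγ]
    · simp only [if_neg h]
      push Not at h
      have e1 : v ^ (-(γ - 1)) ≤ L ^ (-(γ - 1)) :=
        Real.rpow_le_rpow_of_nonpos hL0 h.le (by linarith)
      have e2 : v ^ (-(γ - 1)) * v ^ γ = v := by
        rw [← Real.rpow_add hv]; ring_nf; exact Real.rpow_one v
      nlinarith [mul_le_mul_of_nonneg_right e1 hvγ]
  rw [integral_sub hm1 (hi1.const_mul _), integral_const_mul, hm2] at h2
  have h3 : L ^ (-(γ - 1)) * (∫ v, (1 + v ^ γ) ∂(f t)) ≤ L ^ (-(γ - 1)) * C :=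
    mul_le_mul_of_nonneg_left hi2 hLn
  linarith

lemma rt_increment {K h : ℝ → ℝ → ℝ} {g : ℝ → ℝ} {γ H H₀ H₁ G₀ G₁ k : ℝ}
    (hK : KernelAssumptionA K h g γ H H₀ H₁ G₀ G₁ k)
    {T : ℝ} (hT : 0 ≤ T) {fin : Measure ℝ} (hconc : fin (Iic 0) = 0)
    (hγmom : Integrable (fun v => 1 + v ^ γ) fin)
    {f : ℝ → Measure ℝ} (hf : IsWeakSolution K γ T f fin)
    {v₀ : ℝ} (hv₀ : 0 < v₀)
    (hmass : ∀ t ∈ Icc (0 : ℝ) T, Integrable (fun v => v) (f t) ∧ (∫ v, v ∂(f t)) = v₀)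
    {L : ℝ} (hL : 0 < L) (hLi : ∀ t ∈ Icc (0 : ℝ) T,
      Integrable (fun v : ℝ => if v ≤ L then v else 0) (f t) ∧
      v₀ / 2 ≤ ∫ v, (if v ≤ L then v else 0) ∂(f t))
    {R N m : ℝ} (hR3 : 3 * L ≤ R) (hRH : H < R) (hLN : L ≤ N / 2) (hm : 2 < m) :
    (∀ s ∈ Icc (0:ℝ) T, (∫ v, rtPhi R N m v ∂(f s)) ≤ N ^ (m - 1) * v₀) ∧
    ∀ a b, 0 ≤ a → a ≤ b → b ≤ T →
      (b - a) * (H₀ * G₀ * (1 / 4) ^ k * v₀ / 8 * ((∫ v, rtPhi R N m v ∂(f a)) *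
        min (m * ((∫ v, rtPhi R N m v ∂(f a)) / (2 * v₀)) ^ ((γ - 1) / (m - 1)))
          ((N / 2) ^ (γ - 1)))) ≤
      (∫ v, rtPhi R N m v ∂(f b)) - (∫ v, rtPhi R N m v ∂(f a)) := by
  have hγ := hK.γ_gt_one
  have hN : 0 < N := by linarith
  have hR : 0 < R := by linarith
  have hm1 : 1 < m := by linarith
  set c₁ := H₀ * G₀ * (1 / 4 : ℝ) ^ k with hc₁
  have hc₁0 : 0 < c₁ := by
    have := hK.H₀_pos; have := hK.G₀_pos
    positivity
  set B := N ^ (m - 1) with hB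
  have hB0 : 0 < B := by positivity
  set F : ℝ → ℝ := fun s => ∫ v, rtPhi R N m v ∂(f s) with hF
  have hfin : ∀ t ∈ Icc (0 : ℝ) T, IsFiniteMeasure (f t) := by
    obtain ⟨C, hC⟩ := hf.moment_bound
    exact fun t ht => rt_finite (hf.conc t ht) (hC t ht).1
  have hφc : Continuous (rtPhi R N m) := rtPhi_cont hm1
  have hw_le : ∀ v : ℝ, 0 < v → max (v - R) 0 ≤ v := fun v hv => max_le (by linarith) hv.le
  have hφle : ∀ v : ℝ, 0 < v → rtPhi R N m v ≤ B * v := by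
    intro v hv
    refine (rtPhi_le hN.le hm1 v).trans ?_
    rw [mul_comm]
    exact mul_le_mul_of_nonneg_left (hw_le v hv) hB0.le
  have hφi : ∀ s ∈ Icc (0:ℝ) T, Integrable (rtPhi R N m) (f s) := by
    intro s hs
    refine ((hmass s hs).1.const_mul B).mono' hφc.aestronglyMeasurable ?_
    filter_upwards [rt_ae_pos (hf.conc s hs)] with v hv
    rw [Real.norm_of_nonneg (rtPhi_nonneg hN.le v)]
    exact hφle v hv
  have hwi : ∀ s ∈ Icc (0:ℝ) T, Integrable (fun v => max (v - R) 0) (f s) := by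
    intro s hs
    refine (hmass s hs).1.mono' (Continuous.aestronglyMeasurable (by fun_prop)) ?_
    filter_upwards [rt_ae_pos (hf.conc s hs)] with v hv
    rw [Real.norm_of_nonneg (le_max_right _ _)]
    exact hw_le v hv
  have hwv : ∀ s ∈ Icc (0:ℝ) T, (∫ v, max (v - R) 0 ∂(f s)) ≤ v₀ := by
    intro s hs
    rw [← (hmass s hs).2]
    refine integral_mono_ae (hwi s hs) (hmass s hs).1 ?_
    filter_upwards [rt_ae_pos (hf.conc s hs)] with v hv using hw_le v hv
  have hF0 : ∀ s, 0 ≤ F s := fun s => integral_nonneg fun v => rtPhi_nonneg hN.le v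
  have hFle : ∀ s ∈ Icc (0:ℝ) T, F s ≤ B * v₀ := by
    intro s hs
    rw [← (hmass s hs).2, ← integral_const_mul]
    refine integral_mono_ae (hφi s hs) ((hmass s hs).1.const_mul B) ?_
    filter_upwards [rt_ae_pos (hf.conc s hs)] with v hv using hφle v hv
  refine ⟨hFle, ?_⟩
  obtain ⟨Kt, hKm, hKe, hK0, hK1⟩ := rt_K hK
  set ζ : ℝ → ℝ := fun v => B * max v 0 - rtPhi R N m v with hζ
  have hζc : Continuous ζ := by
    simp only [hζ]; exact Continuous.sub (by fun_prop) hφc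
  have hζb : ∀ v, |ζ v| ≤ B * (N + R) := by
    intro v
    have hz : 0 ≤ B * (N + R) := by positivity
    simp only [hζ]
    rcases le_total v 0 with h1 | h1
    · have : rtPhi R N m v = 0 := by
        unfold rtPhi; rw [max_eq_right (show v - R ≤ 0 by linarith)]; simp
      rw [this, max_eq_right h1]; simpa using hz
    · rw [max_eq_left h1]
      have h2 : rtPhi R N m v ≤ B * v := by
        refine (rtPhi_le hN.le hm1 v).trans ?_
        rw [mul_comm]
        exact mul_le_mul_of_nonneg_left (max_le (by linarith) h1) hB0.le
      rw [abs_of_nonneg (by linarith)]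
      rcases le_total v (N + R) with h3 | h3
      · have := rtPhi_nonneg (R := R) (m := m) hN.le v
        have := mul_le_mul_of_nonneg_left h3 hB0.le
        linarith
      · have : rtPhi R N m v = (v - R) * B := by
          unfold rtPhi
          rw [max_eq_left (show 0 ≤ v - R by linarith), min_eq_right (by linarith)]
        rw [this]
        nlinarith
  obtain ⟨hw1, hw2, hw3⟩ := rt_weak hK hT hconc hγmom hf hKm hKe hK0 hK1 ζ hζc _ hζb
  have hζF : ∀ s ∈ Icc (0:ℝ) T, (∫ v, ζ v ∂(f s)) = B * v₀ - F s := by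
    intro s hs
    have e : (∫ v, ζ v ∂(f s)) = ∫ v, (B * v - rtPhi R N m v) ∂(f s) := by
      refine integral_congr_ae ?_
      filter_upwards [rt_ae_pos (hf.conc s hs)] with v hv
      simp only [hζ, max_eq_left hv.le]
    rw [e, integral_sub ((hmass s hs).1.const_mul B) (hφi s hs), integral_const_mul,
      (hmass s hs).2]
  set E : ℝ → ℝ := fun s =>
    -∫ p, Kt p * (ζ (p.1 + p.2) - ζ p.1 - ζ p.2) ∂((f s).prod (f s)) with hE
  have hEint : ∀ a b, 0 ≤ a → a ≤ b → b ≤ T → IntervalIntegrable E volume a b := by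
    intro a b h1 h2 h3
    refine (hw2.mono_set ?_).neg
    rw [uIcc_of_le h2, uIcc_of_le hT]
    exact Icc_subset_Icc h1 h3
  have hdiff : ∀ a b, 0 ≤ a → a ≤ b → b ≤ T → F b - F a = (1 / 2) * ∫ s in a..b, E s := by
    intro a b h1 h2 h3
    have ea := hw3 a ⟨h1, h2.trans h3⟩
    have eb := hw3 b ⟨h1.trans h2, h3⟩
    rw [hζF a ⟨h1, h2.trans h3⟩] at ea
    rw [hζF b ⟨h1.trans h2, h3⟩] at eb
    have i1 := hEint 0 a le_rfl h1 (h2.trans h3)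
    have i2 := hEint a b h1 h2 h3
    have := intervalIntegral.integral_add_adjacent_intervals i1 i2
    have n1 : (∫ s in (0:ℝ)..a, E s) = -∫ s in (0:ℝ)..a,
        ∫ p, Kt p * (ζ (p.1 + p.2) - ζ p.1 - ζ p.2) ∂((f s).prod (f s)) :=
      intervalIntegral.integral_neg
    have n2 : (∫ s in (0:ℝ)..b, E s) = -∫ s in (0:ℝ)..b,
        ∫ p, Kt p * (ζ (p.1 + p.2) - ζ p.1 - ζ p.2) ∂((f s).prod (f s)) :=
      intervalIntegral.integral_neg
    linarith
  set θ : ℝ → ℝ := fun x => min (m * (x / (2 * v₀)) ^ ((γ - 1) / (m - 1)))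
          ((N / 2) ^ (γ - 1)) with hθ
  have hθ0 : ∀ x, 0 ≤ x → 0 ≤ θ x := fun x hx => le_min (by positivity) (by positivity)
  have hα0 : 0 ≤ (γ - 1) / (m - 1) := div_nonneg (by linarith) (by linarith)
  have hθmono : ∀ x y, 0 ≤ x → x ≤ y → θ x ≤ θ y := by
    intro x y hx hxy
    refine min_le_min_right _ ?_
    gcongr
  have hElow : ∀ s ∈ Icc (0:ℝ) T, c₁ * v₀ / 4 * (F s * θ (F s)) ≤ E s := by
    intro s hs
    have := hfin s hs
    have hpae := rt_prod_ae (hf.conc s hs)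
    set lam := F s / (2 * v₀) with hlam
    have hlam0 : 0 ≤ lam := div_nonneg (hF0 s) (by positivity)
    have hi1 : Integrable (fun v => rtPhi R N m v - lam * max (v - R) 0) (f s) :=
      (hφi s hs).sub ((hwi s hs).const_mul lam)
    have hmono : (∫ p : ℝ × ℝ, c₁ * θ (F s) * ((rtPhi R N m p.1 - lam * max (p.1 - R) 0) *
        (if p.2 ≤ L then p.2 else 0)) ∂((f s).prod (f s))) ≤ E s := by
      simp only [hE]
      rw [← integral_neg]
      refine integral_mono_ae ((hi1.mul_prod (hLi s hs).1).const_mul _) (hw1 s hs).neg ?_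
      filter_upwards [hpae] with p hp
      have hpt := rt_point (c := c₁) (γ := γ) (m := m) (R := R) (N := N) (L := L) (lam := lam)
        (Kv := Kt p) (v := p.1) (v' := p.2) hγ hm hc₁0 hR (by linarith) hLN hN hlam0 hp.1 hp.2
        (hK0 p hp.1 hp.2) (by
          intro h1 h2
          rw [hKe p hp.1 hp.2]
          exact rt_K_lower hK hp.2 (by linarith) (by linarith))
      refine hpt.trans (le_of_eq ?_)
      simp only [hζ]
      rw [max_eq_left hp.1.le, max_eq_left hp.2.le, max_eq_left (add_pos hp.1 hp.2).le]
      ring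
    rw [integral_const_mul, integral_prod_mul (fun v : ℝ => rtPhi R N m v - lam * max (v - R) 0)
      (fun v : ℝ => if v ≤ L then v else 0), integral_sub (hφi s hs) ((hwi s hs).const_mul lam),
      integral_const_mul] at hmono
    refine le_trans ?_ hmono
    have hA : F s / 2 ≤ F s - lam * ∫ v, max (v - R) 0 ∂(f s) := by
      have h1 := mul_le_mul_of_nonneg_left (hwv s hs) hlam0
      have h2 : lam * v₀ = F s / 2 := by rw [hlam]; field_simp
      linarith
    have hBB := (hLi s hs).2
    have hmul := mul_le_mul hA hBB (by positivity) (le_trans (by linarith [hF0 s]) hA)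
    have hc : 0 ≤ c₁ * θ (F s) := mul_nonneg hc₁0.le (hθ0 _ (hF0 s))
    calc c₁ * v₀ / 4 * (F s * θ (F s)) = c₁ * θ (F s) * (F s / 2 * (v₀ / 2)) := by ring
      _ ≤ _ := mul_le_mul_of_nonneg_left hmul hc
  intro a b h1 h2 h3
  have hE0 : ∀ s ∈ Icc (0:ℝ) T, 0 ≤ E s := by
    intro s hs
    refine le_trans ?_ (hElow s hs)
    have := hθ0 _ (hF0 s)
    have := hF0 s
    positivity
  have hFm : ∀ s, a ≤ s → s ≤ T → F a ≤ F s := by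
    intro s hs1 hs2
    have e := hdiff a s h1 hs1 hs2
    have : 0 ≤ ∫ u in a..s, E u :=
      intervalIntegral.integral_nonneg hs1 fun u hu => hE0 u ⟨h1.trans hu.1, hu.2.trans hs2⟩
    linarith
  change (b - a) * (c₁ * v₀ / 8 * (F a * θ (F a))) ≤ F b - F a
  rw [hdiff a b h1 h2 h3]
  have : (∫ s in a..b, c₁ * v₀ / 4 * (F a * θ (F a))) ≤ ∫ s in a..b, E s := by
    refine intervalIntegral.integral_mono_on h2 intervalIntegrable_const (hEint a b h1 h2 h3) ?_
    intro s hs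
    have hs' : s ∈ Icc (0:ℝ) T := ⟨h1.trans hs.1, hs.2.trans h3⟩
    refine le_trans ?_ (hElow s hs')
    have hFF := hFm s hs.1 hs'.2
    refine mul_le_mul_of_nonneg_left ?_ (by positivity)
    exact mul_le_mul hFF (hθmono _ _ (hF0 a) hFF) (hθ0 _ (hF0 a)) (hF0 s)
  rw [intervalIntegral.integral_const, smul_eq_mul] at this
  linarith

lemma rtPhi_tendsto {μ : Measure ℝ} {R m : ℝ} (hm : 2 < m)
    (hpos : 0 < ∫ v in Ici R, (v - R) ^ m ∂μ) :
    Tendsto (fun n : ℕ => ∫ v, rtPhi R n m v ∂μ) atTop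
      (nhds (∫ v in Ici R, (v - R) ^ m ∂μ)) := by
  have hi : IntegrableOn (fun v => (v - R) ^ m) (Ici R) μ := by
    by_contra h
    rw [integral_undef h] at hpos
    exact lt_irrefl _ hpos
  rw [← integral_indicator measurableSet_Ici]
  have hi' := (integrable_indicator_iff measurableSet_Ici).2 hi
  have hpw : ∀ w : ℝ, 0 ≤ w → w * w ^ (m - 1) = w ^ m := by
    intro w hw
    rcases hw.eq_or_lt with h | h
    · rw [← h]; simp [Real.zero_rpow (show m ≠ 0 by linarith)]
    · rw [mul_comm, ← Real.rpow_add_one h.ne']; ring_nf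
  have hv0 : ∀ (N v : ℝ), v < R → rtPhi R N m v = 0 := by
    intro N v hv
    unfold rtPhi; rw [max_eq_right (show v - R ≤ 0 by linarith)]; simp
  refine tendsto_integral_of_dominated_convergence _
    (fun n => (rtPhi_cont (by linarith)).aestronglyMeasurable) hi' ?_ ?_
  · intro n
    refine Eventually.of_forall fun v => ?_
    rw [Real.norm_of_nonneg (rtPhi_nonneg (by positivity) v)]
    by_cases hv : v ∈ Ici R
    · rw [indicator_of_mem hv]
      have hv' : 0 ≤ v - R := by simpa using hv
      rw [← hpw _ hv']
      unfold rtPhi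
      rw [max_eq_left hv']
      refine mul_le_mul_of_nonneg_left ?_ hv'
      exact Real.rpow_le_rpow (le_min hv' (by positivity)) (min_le_left _ _) (by linarith)
    · rw [indicator_of_notMem hv, hv0 _ _ (by simpa using hv)]
  · refine Eventually.of_forall fun v => ?_
    refine tendsto_const_nhds.congr' ?_
    obtain ⟨n0, hn0⟩ := exists_nat_ge (v - R)
    filter_upwards [eventually_ge_atTop n0] with n hn
    have hn' : (n0 : ℝ) ≤ n := by exact_mod_cast hn
    by_cases hv : v ∈ Ici R
    · rw [indicator_of_mem hv]
      have hv' : 0 ≤ v - R := by simpa using hv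
      rw [← hpw _ hv']
      unfold rtPhi
      rw [max_eq_left hv', min_eq_left (by linarith)]
    · rw [indicator_of_notMem hv, hv0 _ _ (by simpa using hv)]

lemma rt_const {γ m W c : ℝ} (hγ : 1 < γ) (hm : 2 < m) (hW : 0 < W) (hc : 0 < c) :
    W ^ ((γ - 1) / (m - 1)) / (c * m * (1 - 2 ^ (-((γ - 1) / (m - 1))))) ≤
      (max 1 W) ^ (γ - 1) * ((γ + 1) / (c * (γ - 1))) := by
  set α := (γ - 1) / (m - 1) with hα
  have hα0 : 0 < α := div_pos (by linarith) (by linarith)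
  have hα1 : α ≤ γ - 1 := div_le_self (by linarith) (by linarith)
  have hαm : α * (m - 1) = γ - 1 := div_mul_cancel₀ _ (by linarith)
  have h2 : 1 + α / 2 ≤ (2:ℝ) ^ α := by
    rw [Real.rpow_def_of_pos (by norm_num)]
    have := Real.add_one_le_exp (Real.log 2 * α)
    have hl : 1 / 2 ≤ Real.log 2 := by linarith [Real.log_two_gt_d9]
    nlinarith
  have h3 : (2:ℝ) ^ (-α) ≤ (1 + α / 2)⁻¹ := by
    rw [Real.rpow_neg (by norm_num)]
    exact inv_anti₀ (by positivity) h2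
  have h4 : α / (γ + 1) ≤ 1 - (2:ℝ) ^ (-α) := by
    have h5 : α / (γ + 1) ≤ 1 - (1 + α / 2)⁻¹ := by
      have : 1 - (1 + α / 2)⁻¹ = α / (2 + α) := by field_simp; ring
      rw [this]
      exact div_le_div_of_nonneg_left hα0.le (by positivity) (by linarith)
    linarith
  have h5 : (γ - 1) / (γ + 1) ≤ m * (1 - (2:ℝ) ^ (-α)) := by
    have e : (γ - 1) / (γ + 1) = (m - 1) * (α / (γ + 1)) := by rw [← hαm]; ring
    rw [e]
    have h6 : 0 ≤ α / (γ + 1) := div_nonneg hα0.le (by linarith)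
    exact mul_le_mul (by linarith) h4 h6 (by linarith)
  have h6 : W ^ α ≤ (max 1 W) ^ (γ - 1) :=
    (Real.rpow_le_rpow hW.le (le_max_right _ _) hα0.le).trans
      (Real.rpow_le_rpow_of_exponent_le (le_max_left _ _) hα1)
  have h7 : 0 < (γ - 1) / (γ + 1) := div_pos (by linarith) (by linarith)
  have h8 : 0 ≤ (max 1 W) ^ (γ - 1) := by positivity
  calc W ^ α / (c * m * (1 - 2 ^ (-α))) ≤ (max 1 W) ^ (γ - 1) / (c * ((γ - 1) / (γ + 1))) := by
        rw [mul_assoc]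
        exact div_le_div₀ h8 h6 (by positivity) (mul_le_mul_of_nonneg_left h5 hc.le)
    _ = _ := by
        have : γ - 1 ≠ 0 := by linarith
        have : γ + 1 ≠ 0 := by linarith
        field_simp

/-- Quantitative bound on the remaining time: there are `R₀ > 0`
and `C > 0` (independent of `m` and `R`) such that, whenever the tail moment
`M = ∫_{[R,∞)} (v-R)^m f(dv,t)` is positive, `T ≤ t + C · M^{-(γ-1)/(m-1)}`. -/
theorem remaining_time_bound
    (K h : ℝ → ℝ → ℝ) (g : ℝ → ℝ) (γ H H₀ H₁ G₀ G₁ k : ℝ)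
    (hK : KernelAssumptionA K h g γ H H₀ H₁ G₀ G₁ k)
    (T'' : ℝ) (hT'' : 0 < T'')
    (fin : Measure ℝ) (hconc : fin (Iic 0) = 0)
    (hγmom : Integrable (fun v => 1 + v ^ γ) fin)
    (hv₀ : 0 < ∫ v, v ∂fin)
    (f : ℝ → Measure ℝ) (hf : IsWeakSolution K γ T'' f fin)
    (hmc : IsMassConserving T'' f fin)
    (T : ℝ) (hT : T ∈ Ioo (0 : ℝ) T'') :
    ∃ R₀ : ℝ, 0 < R₀ ∧ ∃ C : ℝ, 0 < C ∧
      ∀ t ∈ Icc (0 : ℝ) T, ∀ m : ℝ, 2 < m → ∀ R : ℝ, R₀ ≤ R →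
        0 < (∫ v in Ici R, (v - R) ^ m ∂(f t)) →
        T ≤ t + C * (∫ v in Ici R, (v - R) ^ m ∂(f t)) ^ (-((γ - 1) / (m - 1))) := by
  obtain ⟨hT0, hTT⟩ := hT
  have hγ := hK.γ_gt_one
  set v₀ := ∫ v, v ∂fin with hv₀def
  obtain ⟨C, hC⟩ := hf.moment_bound
  obtain ⟨L, hL0, hL⟩ := rt_L hγ hv₀ hf.conc hC hmc.2
  set c := H₀ * G₀ * (1 / 4 : ℝ) ^ k * v₀ / 8 with hc
  have hc0 : 0 < c := by
    have := hK.H₀_pos; have := hK.G₀_pos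
    positivity
  set D := (max 1 (2 * v₀)) ^ (γ - 1) * ((γ + 1) / (c * (γ - 1))) with hD
  have hγ1 : 0 < γ - 1 := by linarith
  have hD0 : 0 < D := by
    have : 0 < max 1 (2 * v₀) := lt_max_of_lt_left one_pos
    positivity
  refine ⟨max (3 * L) (H + 1), lt_max_of_lt_left (by positivity), D, hD0, ?_⟩
  intro t ht m hm R hR hM
  have hR1 : 3 * L ≤ R := (le_max_left _ _).trans hR
  have hR2 : H < R := by
    have := (le_max_right (3 * L) (H + 1)).trans hR
    linarith
  set M := ∫ v in Ici R, (v - R) ^ m ∂(f t) with hMdef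
  set α := (γ - 1) / (m - 1) with hα
  have hm1 : 0 < m - 1 := by linarith
  have hα0 : 0 < α := div_pos hγ1 hm1
  by_contra hcon
  push Not at hcon
  have hlim : Tendsto (fun n : ℕ => ∫ v, rtPhi R n m v ∂(f t)) atTop (nhds M) :=
    rtPhi_tendsto hm hM
  have hlim2 : Tendsto (fun n : ℕ => t + D * (∫ v, rtPhi R n m v ∂(f t)) ^ (-α)) atTop
      (nhds (t + D * M ^ (-α))) :=
    ((hlim.rpow_const (Or.inl hM.ne')).const_mul D).const_add t
  have hBlim : Tendsto (fun n : ℕ => ((n : ℝ) / 2) ^ (γ - 1)) atTop atTop :=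
    (tendsto_rpow_atTop hγ1).comp
      (tendsto_natCast_atTop_atTop.atTop_div_const (by norm_num))
  set Q := v₀ * (2 ^ (m - 1) * m ^ (1 / α)) / (2 * v₀ * ((T'' - T) * c)) with hQ
  obtain ⟨n, hn1, hn2, hn3, hn4⟩ := ((hlim.eventually (lt_mem_nhds hM)).and
    ((hlim2.eventually (gt_mem_nhds hcon)).and ((hBlim.eventually_gt_atTop Q).and
    (tendsto_natCast_atTop_atTop.eventually_ge_atTop (2 * L))))).exists
  have hn0 : (0:ℝ) < n := by linarith
  obtain ⟨hFle, hinc⟩ := rt_increment hK hT''.le hconc hγmom hf hv₀ hmc.2 hL0 hL hR1 hR2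
    (N := n) (m := m) (by linarith) hm
  have hode := rt_ode (F := fun s => ∫ v, rtPhi R n m v ∂(f s)) (t := t) (T := T) (T' := T'')
    (c := c) (m := m) (α := α) (W := 2 * v₀) (B := ((n : ℝ) / 2) ^ (γ - 1))
    (P := (n : ℝ) ^ (m - 1) * v₀) hTT hc0 (by linarith) hα0 (by positivity) (by positivity)
    (fun a b h1 h2 h3 => hinc a b (ht.1.trans h1) h2 h3)
    (fun a => integral_nonneg fun v => rtPhi_nonneg hn0.le v) hn1
    (hFle T'' ⟨hT''.le, le_rfl⟩) (by
      have hcst := rt_const (γ := γ) (m := m) (W := 2 * v₀) (c := c) hγ hm (by positivity) hc0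
      have := mul_le_mul_of_nonneg_left hcst (Real.rpow_nonneg hn1.le (-α))
      rw [mul_comm D] at hn2
      linarith)
  set B := ((n : ℝ) / 2) ^ (γ - 1) with hB
  have hTT' : 0 < T'' - T := by linarith
  have e1 : (B / m) ^ (1 / α) = (n : ℝ) ^ (m - 1) / (2 ^ (m - 1) * m ^ (1 / α)) := by
    rw [Real.div_rpow (by positivity) (by linarith), hB, ← Real.rpow_mul (by positivity)]
    have : (γ - 1) * (1 / α) = m - 1 := by rw [hα]; field_simp
    rw [this, Real.div_rpow hn0.le (by norm_num), div_div]
  rw [e1] at hode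
  have hm0 : 0 < m := by linarith
  have hX : 0 < (n : ℝ) ^ (m - 1) := by positivity
  have hY : 0 < 2 ^ (m - 1) * m ^ (1 / α) := by positivity
  set X := (n : ℝ) ^ (m - 1)
  set Y := 2 ^ (m - 1) * m ^ (1 / α)
  have h1 : B ≤ Q := by
    rw [hQ, le_div_iff₀ (by positivity)]
    have e2 : 2 * v₀ * (X / Y) * ((T'' - T) * (c * B)) =
        X / Y * (B * (2 * v₀ * ((T'' - T) * c))) := by ring
    rw [e2] at hode
    have e3 : X * v₀ = X / Y * (v₀ * Y) := by field_simp
    rw [e3] at hode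
    exact le_of_mul_le_mul_left hode (by positivity)
  linarith
end
end

section
/- Let K satisfy Assumption A and let f_in be a nonzero nonnegative Radon measure on (0,∞) with ∫(1+v^γ) f_in(dv) < ∞ which is not a single Dirac measure (there are no M, V ∈ (0,∞) with f_in = M·δ_V). Then for every T > 0 there exists no weak solution of the coagulation equation on [0,T] with kernel K and initial datum f_in — neither mass-conserving nor mass-losing. -/
open MeasureTheory Set Filter

noncomputable section

/-! ### Abstract set-up -/

/-- The coagulation increment of a test function. -/
def Dl (φ : ℝ → ℝ) (p : ℝ × ℝ) : ℝ := φ (p.1 + p.2) - φ p.1 - φ p.2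

/-- The coagulation operator tested against `φ`. -/
def Xop (κ : ℝ × ℝ → ℝ) (μ : ℝ → Measure ℝ) (φ : ℝ → ℝ) (r : ℝ) : ℝ :=
  ∫ p, κ p * Dl φ p ∂((μ r).prod (μ r))

/-- A family of measures (already clamped in time) solving the equation. -/
structure Sol (κ : ℝ × ℝ → ℝ) (γ B T C : ℝ) (μ : ℝ → Measure ℝ) (ν : Measure ℝ) : Prop where
  γ1 : 1 < γ
  B0 : 0 ≤ B
  T0 : 0 < T
  κ_meas : Measurable κ
  κ_nonneg : ∀ p, 0 ≤ κ p
  κ_le : ∀ v v', 0 < v → 0 < v' → κ (v, v') ≤ B * (v ^ γ + v' ^ γ)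
  finm : ∀ r, IsFiniteMeasure (μ r)
  conc : ∀ r, ∀ᵐ v ∂(μ r), 0 < v
  cont : ∀ φ : ℝ → ℝ, Continuous φ → (∃ M : ℝ, ∀ v, |φ v| ≤ M) →
    Continuous (fun t => ∫ v, φ v ∂(μ t))
  int : ∀ r, Integrable (fun v => 1 + v ^ γ) (μ r)
  bd : ∀ r, (∫ v, (1 + v ^ γ) ∂(μ r)) ≤ C
  weak : ∀ φ : ℝ → ℝ, Continuous φ → HasCompactSupport φ → tsupport φ ⊆ Ioi 0 →
    ∀ t ∈ Icc (0 : ℝ) T, (∫ v, φ v ∂(μ t)) - (∫ v, φ v ∂ν) =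
      (1 / 2) * ∫ r in (0 : ℝ)..t, Xop κ μ φ r

/-- Lipschitz test functions, in elementary form. -/
def Lip (Λ : ℝ) (φ : ℝ → ℝ) : Prop := ∀ x y, |φ x - φ y| ≤ Λ * |x - y|

lemma Lip.continuous {Λ : ℝ} {φ : ℝ → ℝ} (h : Lip Λ φ) (hΛ : 0 ≤ Λ) : Continuous φ := by
  have : LipschitzWith ⟨Λ, hΛ⟩ φ := LipschitzWith.of_dist_le_mul fun x y => by
    rw [Real.dist_eq, Real.dist_eq]
    exact h x y
  exact this.continuous

namespace Sol

variable {κ : ℝ × ℝ → ℝ} {γ B T C : ℝ} {μ : ℝ → Measure ℝ} {ν : Measure ℝ}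

lemma le_rho (hγ : 1 < γ) {v : ℝ} (hv : 0 < v) : v ≤ 1 + v ^ γ := by
  rcases le_total v 1 with h | h
  · have := Real.rpow_nonneg hv.le γ
    linarith
  · have := Real.rpow_le_rpow_of_exponent_le h hγ.le
    rw [Real.rpow_one] at this
    linarith

lemma Dl_le {Λ : ℝ} {φ : ℝ → ℝ} (h : Lip Λ φ) (h0 : φ 0 = 0) {v w : ℝ}
    (hv : 0 < v) (hw : 0 < w) : |Dl φ (v, w)| ≤ 2 * Λ * v ∧ |Dl φ (v, w)| ≤ 2 * Λ * w := by
  have a1 := h (v + w) v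
  have a2 := h (v + w) w
  have a3 := h v 0
  have a4 := h w 0
  simp only [add_sub_cancel_left, add_sub_cancel_right, sub_zero, h0, abs_of_pos hv,
    abs_of_pos hw] at a1 a2 a3 a4
  unfold Dl
  rw [abs_le] at *
  rw [abs_le]
  simp only
  constructor <;> constructor <;> linarith [a1.1, a1.2, a2.1, a2.2, a3.1, a3.2, a4.1, a4.2]

lemma kDl_le (S : Sol κ γ B T C μ ν) {Λ : ℝ} (hΛ : 0 ≤ Λ) {φ : ℝ → ℝ} (h : Lip Λ φ)
    (h0 : φ 0 = 0) {v w : ℝ} (hv : 0 < v) (hw : 0 < w) :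
    |κ (v, w) * Dl φ (v, w)| ≤ 4 * Λ * B * ((1 + v ^ γ) * (1 + w ^ γ)) := by
  obtain ⟨d1, d2⟩ := Dl_le h h0 hv hw
  have k1 := S.κ_le v w hv hw
  have k0 := S.κ_nonneg (v, w)
  have r1 := le_rho S.γ1 hv
  have r2 := le_rho S.γ1 hw
  have e1 := Real.rpow_nonneg hv.le γ
  have e2 := Real.rpow_nonneg hw.le γ
  have hB := S.B0
  rw [abs_mul, abs_of_nonneg k0]
  calc κ (v, w) * |Dl φ (v, w)| ≤ B * (v ^ γ + w ^ γ) * |Dl φ (v, w)| := by gcongr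
    _ = B * v ^ γ * |Dl φ (v, w)| + B * w ^ γ * |Dl φ (v, w)| := by ring
    _ ≤ B * v ^ γ * (2 * Λ * w) + B * w ^ γ * (2 * Λ * v) := by gcongr
    _ ≤ B * (1 + v ^ γ) * (2 * Λ * (1 + w ^ γ)) + B * (1 + w ^ γ) * (2 * Λ * (1 + v ^ γ)) := by
        gcongr <;> linarith
    _ = _ := by ring

lemma ae_prod (S : Sol κ γ B T C μ ν) (r : ℝ) :
    ∀ᵐ p ∂((μ r).prod (μ r)), 0 < p.1 ∧ 0 < p.2 := by
  have := S.finm r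
  have h1 : ∀ᵐ p ∂((μ r).prod (μ r)), 0 < p.1 :=
    Measure.quasiMeasurePreserving_fst.ae (S.conc r)
  have h2 : ∀ᵐ p ∂((μ r).prod (μ r)), 0 < p.2 :=
    Measure.quasiMeasurePreserving_snd.ae (S.conc r)
  filter_upwards [h1, h2] with p a b using ⟨a, b⟩

lemma Dl_meas {φ : ℝ → ℝ} (h : Continuous φ) : Measurable (Dl φ) := by
  have : Continuous (Dl φ) := by unfold Dl; fun_prop
  exact this.measurable

lemma int_rr (S : Sol κ γ B T C μ ν) (r : ℝ) :
    Integrable (fun p : ℝ × ℝ => (1 + p.1 ^ γ) * (1 + p.2 ^ γ)) ((μ r).prod (μ r)) := by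
  have := S.finm r
  exact (S.int r).mul_prod (S.int r)

lemma ae_bd (S : Sol κ γ B T C μ ν) {Λ : ℝ} (hΛ : 0 ≤ Λ) {φ : ℝ → ℝ} (h : Lip Λ φ)
    (h0 : φ 0 = 0) (r : ℝ) : ∀ᵐ p ∂((μ r).prod (μ r)),
      ‖κ p * Dl φ p‖ ≤ 4 * Λ * B * ((1 + p.1 ^ γ) * (1 + p.2 ^ γ)) := by
  filter_upwards [S.ae_prod r] with p hp
  exact S.kDl_le hΛ h h0 hp.1 hp.2

lemma int_X (S : Sol κ γ B T C μ ν) {Λ : ℝ} (hΛ : 0 ≤ Λ) {φ : ℝ → ℝ} (h : Lip Λ φ)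
    (h0 : φ 0 = 0) (r : ℝ) : Integrable (fun p => κ p * Dl φ p) ((μ r).prod (μ r)) := by
  refine ((S.int_rr r).const_mul (4 * Λ * B)).mono' ?_ (S.ae_bd hΛ h h0 r)
  exact (S.κ_meas.mul (Dl_meas (h.continuous hΛ))).aestronglyMeasurable

lemma rho_int_nonneg (S : Sol κ γ B T C μ ν) (r : ℝ) : 0 ≤ ∫ v, (1 + v ^ γ) ∂(μ r) := by
  apply integral_nonneg_of_ae
  filter_upwards [S.conc r] with v hv
  have := Real.rpow_nonneg hv.le γ
  simp only [Pi.zero_apply]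
  linarith

lemma X_le (S : Sol κ γ B T C μ ν) {Λ : ℝ} (hΛ : 0 ≤ Λ) {φ : ℝ → ℝ} (h : Lip Λ φ)
    (h0 : φ 0 = 0) (r : ℝ) : ‖Xop κ μ φ r‖ ≤ 4 * Λ * B * (C * C) := by
  have := S.finm r
  have hB := S.B0
  have := norm_integral_le_of_norm_le ((S.int_rr r).const_mul (4 * Λ * B)) (S.ae_bd hΛ h h0 r)
  refine this.trans ?_
  rw [integral_const_mul, integral_prod_mul (fun v : ℝ => 1 + v ^ γ) (fun v : ℝ => 1 + v ^ γ)]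
  have a := S.rho_int_nonneg r
  have b := S.bd r
  gcongr
  linarith

lemma meas_mu (S : Sol κ γ B T C μ ν) : Measurable μ := by
  have := S.finm
  have key : ∀ F : Set ℝ, IsClosed F → Measurable fun r => μ r F := by
    intro F hF
    have h1 : ∀ n : ℕ, (0 : ℝ) < 1 / ((n : ℝ) + 1) := fun n => Nat.one_div_pos_of_nat
    have h2 : Tendsto (fun n : ℕ => 1 / ((n : ℝ) + 1)) atTop (nhds 0) :=
      tendsto_one_div_add_atTop_nhds_zero_nat
    have : Measurable fun r => (μ r).real F := by
      refine measurable_of_tendsto_metrizable (f := fun (n : ℕ) (r : ℝ) =>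
        ∫ v, (thickenedIndicator (h1 n) F v : ℝ) ∂(μ r)) (fun n => ?_) ?_
      · refine (S.cont _ (by fun_prop) ⟨1, fun v => ?_⟩).measurable
        rw [abs_of_nonneg (by positivity)]
        exact_mod_cast thickenedIndicator_le_one (h1 n) F v
      · rw [tendsto_pi_nhds]
        intro r
        exact tendsto_integral_thickenedIndicator_of_isClosed (μ r) hF h1 h2
    have h3 := this.ennreal_ofReal
    simpa [Measure.real] using h3
  refine Measurable.measure_of_isPiSystem (S := {s | IsClosed s})
    ?_ isPiSystem_isClosed (fun s hs => key s hs) (key _ isClosed_univ)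
  rw [BorelSpace.measurable_eq (α := ℝ), borel_eq_generateFrom_isClosed]

lemma X_meas (S : Sol κ γ B T C μ ν) {Λ : ℝ} (hΛ : 0 ≤ Λ) {φ : ℝ → ℝ} (h : Lip Λ φ)
    (h0 : φ 0 = 0) : Measurable (Xop κ μ φ) := by
  have := S.finm
  let k : ProbabilityTheory.Kernel ℝ ℝ := ⟨μ, S.meas_mu⟩
  have : ∀ r, IsFiniteMeasure (k r) := S.finm
  have : ProbabilityTheory.IsFiniteKernel k := by
    refine ⟨ENNReal.ofReal C, ENNReal.ofReal_lt_top, fun r => ?_⟩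
    change μ r univ ≤ _
    rw [← ENNReal.ofReal_toReal (measure_ne_top (μ r) univ)]
    apply ENNReal.ofReal_le_ofReal
    calc (μ r univ).toReal = ∫ v, (1 : ℝ) ∂(μ r) := by simp [Measure.real]
      _ ≤ ∫ v, (1 + v ^ γ) ∂(μ r) := by
        apply integral_mono_ae (integrable_const _) (S.int r)
        filter_upwards [S.conc r] with v hv
        have := Real.rpow_nonneg hv.le γ
        linarith
      _ ≤ C := S.bd r
  have hm : StronglyMeasurable (fun p : ℝ × ℝ => κ p * Dl φ p) :=
    (S.κ_meas.mul (Dl_meas (h.continuous hΛ))).stronglyMeasurable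
  have e : Xop κ μ φ = fun r => ∫ p, κ p * Dl φ p ∂((ProbabilityTheory.Kernel.prod k k) r) := by
    ext r
    rw [ProbabilityTheory.Kernel.prod_apply]
    rfl
  rw [e]
  exact (StronglyMeasurable.integral_kernel_prod_right' (κ := ProbabilityTheory.Kernel.prod k k)
    (f := fun q : ℝ × (ℝ × ℝ) => κ q.2 * Dl φ q.2) (hm.comp_measurable measurable_snd)).measurable

lemma X_ii (S : Sol κ γ B T C μ ν) {Λ : ℝ} (hΛ : 0 ≤ Λ) {φ : ℝ → ℝ} (h : Lip Λ φ)
    (h0 : φ 0 = 0) (a b : ℝ) : IntervalIntegrable (Xop κ μ φ) volume a b := by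
  refine (intervalIntegrable_const (c := 4 * Λ * B * (C * C))).mono_fun
    (S.X_meas hΛ h h0).aestronglyMeasurable ?_
  filter_upwards with r
  exact (S.X_le hΛ h h0 r).trans (le_abs_self _)

lemma weak_diff (S : Sol κ γ B T C μ ν) {Λ : ℝ} (hΛ : 0 ≤ Λ) {φ : ℝ → ℝ} (h : Lip Λ φ)
    (hc : HasCompactSupport φ) (hs : tsupport φ ⊆ Ioi 0) {s t : ℝ} (h0s : 0 ≤ s) (hst : s ≤ t)
    (htT : t ≤ T) : (∫ v, φ v ∂(μ t)) - (∫ v, φ v ∂(μ s)) =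
      (1 / 2) * ∫ r in s..t, Xop κ μ φ r := by
  have h0 : φ 0 = 0 := by
    by_contra hne
    have h1 : (0 : ℝ) < 0 := hs (subset_tsupport _ hne)
    exact lt_irrefl _ h1
  have a := S.weak φ (h.continuous hΛ) hc hs t ⟨h0s.trans hst, htT⟩
  have b := S.weak φ (h.continuous hΛ) hc hs s ⟨h0s, hst.trans htT⟩
  have c := intervalIntegral.integral_add_adjacent_intervals (S.X_ii hΛ h h0 0 s)
    (S.X_ii hΛ h h0 s t)
  rw [← c] at a
  linarith

lemma int_lip (S : Sol κ γ B T C μ ν) {Λ : ℝ} (hΛ : 0 ≤ Λ) {φ : ℝ → ℝ} (h : Lip Λ φ)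
    (h0 : φ 0 = 0) (r : ℝ) : Integrable φ (μ r) := by
  refine ((S.int r).const_mul Λ).mono' (h.continuous hΛ).aestronglyMeasurable ?_
  filter_upwards [S.conc r] with v hv
  have := h v 0
  rw [h0, sub_zero, sub_zero, abs_of_pos hv] at this
  exact this.trans (mul_le_mul_of_nonneg_left (le_rho S.γ1 hv) hΛ)

/-- Weak formulation for nonnegative Lipschitz functions vanishing near `0`. -/
lemma weak_ext (S : Sol κ γ B T C μ ν) {Λ : ℝ} (hΛ : 0 < Λ) {φ : ℝ → ℝ} (h : Lip Λ φ)
    (hφ : ∀ v, 0 ≤ φ v) {ε : ℝ} (hε : 0 < ε) (hz : ∀ v ≤ ε, φ v = 0) {s t : ℝ}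
    (h0s : 0 ≤ s) (hst : s ≤ t) (htT : t ≤ T) :
    (∫ v, φ v ∂(μ t)) - (∫ v, φ v ∂(μ s)) = (1 / 2) * ∫ r in s..t, Xop κ μ φ r := by
  have h0 : φ 0 = 0 := hz 0 hε.le
  let ψ : ℕ → ℝ → ℝ := fun n v => min (φ v) (max 0 (Λ * (n - v)))
  have ψ0 : ∀ n v, 0 ≤ ψ n v := fun n v => le_min (hφ v) (le_max_left _ _)
  have ψle : ∀ n v, ψ n v ≤ φ v := fun n v => min_le_left _ _
  have ψL : ∀ n, Lip Λ (ψ n) := by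
    intro n x y
    refine (abs_min_sub_min_le_max _ _ _ _).trans (max_le (h x y) ?_)
    refine (abs_max_sub_max_le_max _ _ _ _).trans (max_le ?_ ?_)
    · simp; positivity
    · rw [← mul_sub, abs_mul, abs_of_pos hΛ]
      rw [show (n - x) - (n - y : ℝ) = y - x by ring, abs_sub_comm]
  have ψz : ∀ n, ψ n 0 = 0 := fun n => le_antisymm ((ψle n 0).trans h0.le) (ψ0 n 0)
  have ψsup : ∀ n, Function.support (ψ n) ⊆ Icc ε n := by
    intro n v hv
    by_contra hcon
    apply hv
    rw [mem_Icc, not_and_or, not_le, not_le] at hcon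
    rcases hcon with hcon | hcon
    · exact le_antisymm ((ψle n v).trans (hz v hcon.le).le) (ψ0 n v)
    · refine le_antisymm ?_ (ψ0 n v)
      refine (min_le_right _ _).trans (max_le le_rfl ?_)
      nlinarith
  have ψts : ∀ n, tsupport (ψ n) ⊆ Icc ε n := fun n => closure_minimal (ψsup n) isClosed_Icc
  have ψev : ∀ v, ∀ᶠ n : ℕ in atTop, ψ n v = φ v := by
    intro v
    obtain ⟨N, hN⟩ := exists_nat_ge (φ v / Λ + v)
    filter_upwards [eventually_ge_atTop N] with n hn
    apply min_eq_left
    apply le_max_of_le_right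
    have : (N : ℝ) ≤ n := by exact_mod_cast hn
    have h2 : φ v / Λ ≤ n - v := by linarith
    rw [div_le_iff₀ hΛ] at h2
    linarith
  have ψt : ∀ v, Tendsto (fun n => ψ n v) atTop (nhds (φ v)) := fun v =>
    tendsto_const_nhds.congr' (by filter_upwards [ψev v] with n hn using hn.symm)
  have lim1 : ∀ r, Tendsto (fun n => ∫ v, ψ n v ∂(μ r)) atTop (nhds (∫ v, φ v ∂(μ r))) := by
    intro r
    refine tendsto_integral_of_dominated_convergence φ
      (fun n => ((ψL n).continuous hΛ.le).aestronglyMeasurable) (S.int_lip hΛ.le h h0 r) ?_ ?_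
    · intro n
      filter_upwards with v
      rw [Real.norm_eq_abs, abs_of_nonneg (ψ0 n v)]
      exact ψle n v
    · filter_upwards with v using ψt v
  have limX : ∀ r, Tendsto (fun n => Xop κ μ (ψ n) r) atTop (nhds (Xop κ μ φ r)) := by
    intro r
    refine tendsto_integral_of_dominated_convergence
      (fun p => 4 * Λ * B * ((1 + p.1 ^ γ) * (1 + p.2 ^ γ)))
      (fun n => (S.κ_meas.mul (Dl_meas ((ψL n).continuous hΛ.le))).aestronglyMeasurable)
      ((S.int_rr r).const_mul _) (fun n => S.ae_bd hΛ.le (ψL n) (ψz n) r) ?_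
    filter_upwards with p
    unfold Dl
    exact (((ψt _).sub (ψt _)).sub (ψt _)).const_mul _
  have lim2 : Tendsto (fun n => ∫ r in s..t, Xop κ μ (ψ n) r) atTop
      (nhds (∫ r in s..t, Xop κ μ φ r)) := by
    refine intervalIntegral.tendsto_integral_filter_of_dominated_convergence
      (fun _ => 4 * Λ * B * (C * C)) ?_ ?_ intervalIntegrable_const ?_
    · filter_upwards with n using (S.X_meas hΛ.le (ψL n) (ψz n)).aestronglyMeasurable
    · filter_upwards with n
      filter_upwards with r _ using S.X_le hΛ.le (ψL n) (ψz n) r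
    · filter_upwards with r _ using limX r
  refine tendsto_nhds_unique ((lim1 t).sub (lim1 s)) ?_
  refine (lim2.const_mul (1 / 2)).congr fun n => ?_
  refine (S.weak_diff hΛ.le (ψL n) ?_ ?_ h0s hst htT).symm
  · exact HasCompactSupport.of_support_subset_isCompact isCompact_Icc (ψsup n)
  · exact fun v hv => hε.trans_le (ψts n hv).1

/-! ### Persistence of positivity -/

lemma persist_aux {y : ℝ → ℝ} {A T : ℝ} (hy : Continuous y) (hy0 : ∀ t, 0 ≤ y t) (hA : 0 < A)
    (H : ∀ s t, 0 ≤ s → s ≤ t → t ≤ T → y s - A * (∫ r in s..t, y r) ≤ y t) :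
    ∃ c : ℝ, 0 < c ∧ ∀ s t, 0 ≤ s → s ≤ t → t ≤ T → c * y s ≤ y t := by
  have step : ∀ s t, 0 ≤ s → s ≤ t → t ≤ T → t - s ≤ 1 / (2 * A) → 1 / 2 * y s ≤ y t := by
    intro s t h0 hst htT hd
    obtain ⟨σ, hσ, hmax⟩ := (isCompact_Icc (a := s) (b := t)).exists_isMaxOn
      ⟨s, left_mem_Icc.2 hst⟩ hy.continuousOn
    have h1 := H σ t (h0.trans hσ.1) hσ.2 htT
    have h2 : (∫ r in σ..t, y r) ≤ ∫ r in σ..t, y σ := by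
      apply intervalIntegral.integral_mono_on hσ.2 (hy.intervalIntegrable _ _)
        intervalIntegrable_const
      intro r hr
      exact hmax ⟨hσ.1.trans hr.1, hr.2⟩
    rw [intervalIntegral.integral_const, smul_eq_mul] at h2
    have h3 : y s ≤ y σ := hmax (left_mem_Icc.2 hst)
    have h4 : A * (t - σ) ≤ 1 / 2 := by
      have : t - σ ≤ 1 / (2 * A) := by linarith [hσ.1]
      rw [le_div_iff₀ (by positivity)] at this
      linarith
    have h5 : A * ∫ r in σ..t, y r ≤ A * ((t - σ) * y σ) := by gcongr
    have h6 : A * (t - σ) * y σ ≤ 1 / 2 * y σ := by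
      gcongr
      exact hy0 σ
    linarith
  have ind : ∀ n : ℕ, ∀ s t, 0 ≤ s → s ≤ t → t ≤ T → t - s ≤ n * (1 / (2 * A)) →
      (1 / 2) ^ n * y s ≤ y t := by
    intro n
    induction n with
    | zero =>
      intro s t h0 hst htT hd
      have : s = t := by
        simp at hd
        linarith
      simp [this]
    | succ n ih =>
      intro s t h0 hst htT hd
      have hp : (0 : ℝ) < 1 / (2 * A) := by positivity
      push_cast at hd
      let m := max s (t - 1 / (2 * A))
      have hm1 : s ≤ m := le_max_left _ _
      have hm2 : m ≤ t := max_le hst (by linarith)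
      have a := step m t (h0.trans hm1) hm2 htT (by
        have := le_max_right s (t - 1 / (2 * A))
        change t - max s (t - 1 / (2 * A)) ≤ _
        linarith)
      have b := ih s m h0 hm1 (hm2.trans htT) (by
        have : m ≤ s + n * (1 / (2 * A)) := max_le (by
          have : (0 : ℝ) ≤ n * (1 / (2 * A)) := by positivity
          linarith) (by linarith)
        linarith)
      rw [pow_succ]
      linarith
  obtain ⟨N, hN⟩ := exists_nat_ge (T / (1 / (2 * A)))
  have hp : (0 : ℝ) < 1 / (2 * A) := by positivity
  rw [div_le_iff₀ hp] at hN
  exact ⟨(1 / 2) ^ N, by positivity, fun s t h0 hst htT => ind N s t h0 hst htT (by linarith)⟩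

lemma X_lower (S : Sol κ γ B T C μ ν) {φ : ℝ → ℝ} (h : Lip 1 φ)
    (hφ : ∀ v, 0 ≤ φ v) {ε b : ℝ} (hε : 0 < ε) (hb : 0 < b) (hz : ∀ v ≤ ε, φ v = 0)
    (hzb : ∀ v, b ≤ v → φ v = 0) :
    ∃ A : ℝ, 0 < A ∧ ∀ r, -(A * ∫ v, φ v ∂(μ r)) ≤ Xop κ μ φ r := by
  have h0 : φ 0 = 0 := hz 0 hε.le
  have hB := S.B0
  have hbg := Real.rpow_nonneg hb.le γ
  have hC : 0 ≤ C := (S.rho_int_nonneg 0).trans (S.bd 0)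
  refine ⟨2 * (B * (b ^ γ + 1)) * C + 1, by positivity, fun r => ?_⟩
  have := S.finm r
  have iφ := S.int_lip zero_le_one h h0 r
  have i1 : Integrable (fun p : ℝ × ℝ => φ p.1 * (1 + p.2 ^ γ)) ((μ r).prod (μ r)) :=
    iφ.mul_prod (S.int r)
  have i2 : Integrable (fun p : ℝ × ℝ => (1 + p.1 ^ γ) * φ p.2) ((μ r).prod (μ r)) :=
    (S.int r).mul_prod iφ
  have key : ∀ v w, 0 < v → 0 < w →
      (B * (v ^ γ + w ^ γ)) * φ v ≤ B * (b ^ γ + 1) * (φ v * (1 + w ^ γ)) := by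
    intro v w hv hw
    rcases le_total b v with hbv | hbv
    · simp [hzb v hbv]
    · have e1 : v ^ γ ≤ b ^ γ := Real.rpow_le_rpow hv.le hbv (by linarith [S.γ1])
      have e2 := Real.rpow_nonneg hw.le γ
      have e3 : v ^ γ + w ^ γ ≤ (b ^ γ + 1) * (1 + w ^ γ) := by nlinarith
      calc (B * (v ^ γ + w ^ γ)) * φ v ≤ (B * ((b ^ γ + 1) * (1 + w ^ γ))) * φ v := by
            have := hφ v
            gcongr
        _ = _ := by ring
  have mono : ∫ p, -(B * (b ^ γ + 1) * (φ p.1 * (1 + p.2 ^ γ) + (1 + p.1 ^ γ) * φ p.2))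
      ∂((μ r).prod (μ r)) ≤ Xop κ μ φ r := by
    apply integral_mono_ae ((i1.add i2).const_mul _).neg (S.int_X zero_le_one h h0 r)
    filter_upwards [S.ae_prod r] with p hp
    have k0 := S.κ_nonneg p
    have k1 := S.κ_le p.1 p.2 hp.1 hp.2
    have a1 := key p.1 p.2 hp.1 hp.2
    have a2 := key p.2 p.1 hp.2 hp.1
    have f1 := hφ p.1
    have f2 := hφ p.2
    have f3 := hφ (p.1 + p.2)
    have c1 : κ p * φ p.1 ≤ (B * (p.1 ^ γ + p.2 ^ γ)) * φ p.1 := by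
      gcongr
    have c2 : κ p * φ p.2 ≤ (B * (p.1 ^ γ + p.2 ^ γ)) * φ p.2 := by
      gcongr
    have c3 : 0 ≤ κ p * φ (p.1 + p.2) := by positivity
    unfold Dl
    simp only [Pi.neg_apply, Pi.add_apply]
    rw [add_comm (p.2 ^ γ)] at a2
    linarith
  refine le_trans ?_ mono
  rw [integral_neg, integral_const_mul, integral_add i1 i2,
    integral_prod_mul φ (fun v : ℝ => 1 + v ^ γ), integral_prod_mul (fun v : ℝ => 1 + v ^ γ) φ]
  have y0 : 0 ≤ ∫ v, φ v ∂(μ r) := integral_nonneg hφ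
  have y1 := S.bd r
  have y2 : B * (b ^ γ + 1) * ((∫ v, φ v ∂(μ r)) * (∫ v, (1 + v ^ γ) ∂(μ r))) ≤
      B * (b ^ γ + 1) * ((∫ v, φ v ∂(μ r)) * C) := by gcongr
  linarith

lemma persist (S : Sol κ γ B T C μ ν) {φ : ℝ → ℝ} (h : Lip 1 φ)
    (hφ : ∀ v, 0 ≤ φ v) {ε b : ℝ} (hε : 0 < ε) (hb : 0 < b) (hz : ∀ v ≤ ε, φ v = 0)
    (hzb : ∀ v, b ≤ v → φ v = 0) (hbd : ∃ M : ℝ, ∀ v, |φ v| ≤ M) :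
    ∃ c : ℝ, 0 < c ∧ ∀ s t, 0 ≤ s → s ≤ t → t ≤ T →
      c * (∫ v, φ v ∂(μ s)) ≤ ∫ v, φ v ∂(μ t) := by
  obtain ⟨A, hA, hX⟩ := S.X_lower h hφ hε hb hz hzb
  have hc := S.cont φ (h.continuous zero_le_one) hbd
  refine persist_aux hc (fun t => integral_nonneg hφ) hA ?_
  intro s t h0s hst htT
  have e := S.weak_ext zero_lt_one h hφ hε hz h0s hst htT
  have m : (∫ r in s..t, -(A * ∫ v, φ v ∂(μ r))) ≤ ∫ r in s..t, Xop κ μ φ r :=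
    intervalIntegral.integral_mono_on hst ((hc.const_mul A).neg.intervalIntegrable _ _)
      (S.X_ii zero_le_one h (hz 0 hε.le) s t) fun r _ => hX r
  rw [intervalIntegral.integral_neg, intervalIntegral.integral_const_mul] at m
  have p : 0 ≤ ∫ r in s..t, ∫ v, φ v ∂(μ r) :=
    intervalIntegral.integral_nonneg hst fun r _ => integral_nonneg hφ
  have : 0 ≤ A * ∫ r in s..t, ∫ v, φ v ∂(μ r) := by positivity
  linarith

/-! ### Bump functions and supports -/

/-- Tent function. -/
def bump (x ε v : ℝ) : ℝ := max 0 (ε - |v - x|)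

lemma bump_nonneg (x ε v : ℝ) : 0 ≤ bump x ε v := le_max_left _ _

lemma bump_lip (x ε : ℝ) : Lip 1 (bump x ε) := by
  intro u v
  refine (abs_max_sub_max_le_max _ _ _ _).trans (max_le (by simp) ?_)
  rw [one_mul, show ε - |u - x| - (ε - |v - x|) = |v - x| - |u - x| by ring]
  refine (abs_abs_sub_abs_le_abs_sub _ _).trans ?_
  rw [show v - x - (u - x) = v - u by ring, abs_sub_comm]

lemma bump_cont (x ε : ℝ) : Continuous (bump x ε) := (bump_lip x ε).continuous zero_le_one

lemma bump_pos {x ε v : ℝ} : 0 < bump x ε v ↔ |v - x| < ε := by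
  simp [bump]

lemma bump_le {x ε v : ℝ} (hε : 0 ≤ ε) : bump x ε v ≤ ε :=
  max_le hε (by linarith [abs_nonneg (v - x)])

lemma bump_bdd (x : ℝ) {ε : ℝ} (hε : 0 ≤ ε) : ∃ M : ℝ, ∀ v, |bump x ε v| ≤ M :=
  ⟨ε, fun v => by rw [abs_of_nonneg (bump_nonneg _ _ _)]; exact bump_le hε⟩

lemma bump_zero {x ε v : ℝ} (h : ε ≤ |v - x|) : bump x ε v = 0 :=
  max_eq_left (by linarith)

lemma bump_zero_left {x ε v : ℝ} (h : v ≤ x - ε) : bump x ε v = 0 :=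
  bump_zero (by rw [abs_sub_comm]; exact le_trans (by linarith) (le_abs_self _))

lemma bump_zero_right {x ε v : ℝ} (h : x + ε ≤ v) : bump x ε v = 0 :=
  bump_zero (le_trans (by linarith) (le_abs_self _))

lemma bump_int (m : Measure ℝ) [IsFiniteMeasure m] (x : ℝ) {ε : ℝ} (hε : 0 ≤ ε) :
    Integrable (bump x ε) m := by
  refine (integrable_const ε).mono' (bump_cont x ε).aestronglyMeasurable ?_
  filter_upwards with v
  rw [Real.norm_eq_abs, abs_of_nonneg (bump_nonneg _ _ _)]
  exact bump_le hε

lemma bump_int_pos (m : Measure ℝ) [IsFiniteMeasure m] (x : ℝ) {ε : ℝ} (hε : 0 ≤ ε) :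
    0 < ∫ v, bump x ε v ∂m ↔ 0 < m (Metric.ball x ε) := by
  rw [integral_pos_iff_support_of_nonneg (bump_nonneg x ε) (bump_int m x hε)]
  have : Function.support (bump x ε) = Metric.ball x ε := by
    ext v
    rw [Function.mem_support, Metric.mem_ball, Real.dist_eq, ← bump_pos]
    exact ⟨fun h => lt_of_le_of_ne (bump_nonneg _ _ _) (Ne.symm h), fun h => h.ne'⟩
  rw [this]

/-- `x` is a positive point of the support of `m`. -/
def Sp (m : Measure ℝ) (x : ℝ) : Prop := 0 < x ∧ ∀ ε, 0 < ε → 0 < m (Metric.ball x ε)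

lemma sp_of_small {m : Measure ℝ} {x : ℝ} (hx : 0 < x)
    (h : ∀ ε, 0 < ε → ε < x → 0 < m (Metric.ball x ε)) : Sp m x := by
  refine ⟨hx, fun ε hε => ?_⟩
  refine (h (min ε (x / 2)) (lt_min hε (by linarith)) ?_).trans_le
    (measure_mono (Metric.ball_subset_ball (min_le_left _ _)))
  exact (min_le_right _ _).trans_lt (by linarith)

lemma bump_persist (S : Sol κ γ B T C μ ν) {x ε : ℝ} (hx : 0 < x) (hε : 0 < ε) (hεx : ε < x) :
    ∃ c : ℝ, 0 < c ∧ ∀ s t, 0 ≤ s → s ≤ t → t ≤ T →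
      c * (∫ v, bump x ε v ∂(μ s)) ≤ ∫ v, bump x ε v ∂(μ t) :=
  S.persist (bump_lip x ε) (bump_nonneg x ε) (ε := x - ε) (b := x + ε) (by linarith)
    (by linarith) (fun _ h => bump_zero_left h) (fun _ h => bump_zero_right h) (bump_bdd x hε.le)

lemma bump_init (S : Sol κ γ B T C μ ν) {x ε : ℝ} (hεx : ε < x) :
    (∫ v, bump x ε v ∂(μ 0)) = ∫ v, bump x ε v ∂ν := by
  have hsup : Function.support (bump x ε) ⊆ Icc (x - ε) (x + ε) := by
    intro v hv
    by_contra hcon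
    rw [mem_Icc, not_and_or, not_le, not_le] at hcon
    rcases hcon with hc | hc
    · exact hv (bump_zero_left hc.le)
    · exact hv (bump_zero_right hc.le)
  have hts : tsupport (bump x ε) ⊆ Icc (x - ε) (x + ε) := closure_minimal hsup isClosed_Icc
  have := S.weak _ (bump_cont x ε)
    (HasCompactSupport.of_support_subset_isCompact isCompact_Icc hsup)
    (fun v hv => lt_of_lt_of_le (by linarith) (hts hv).1) 0 ⟨le_rfl, S.T0.le⟩
  simp at this
  linarith

lemma sp_init (S : Sol κ γ B T C μ ν) [IsFiniteMeasure ν] {x : ℝ} (h : Sp ν x) {t : ℝ}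
    (h0 : 0 ≤ t) (hT : t ≤ T) : Sp (μ t) x := by
  refine sp_of_small h.1 fun ε hε hεx => ?_
  have := S.finm t
  rw [← bump_int_pos _ _ hε.le]
  obtain ⟨c, hc, H⟩ := S.bump_persist h.1 hε hεx
  refine lt_of_lt_of_le ?_ (H 0 t le_rfl h0 hT)
  rw [S.bump_init hεx]
  exact mul_pos hc ((bump_int_pos _ _ hε.le).2 (h.2 ε hε))

lemma sp_add (S : Sol κ γ B T C μ ν)
    (hpos : ∀ v w, 0 < v → 0 < w → v ≠ w → 0 < κ (v, w)) {x y : ℝ} (hxy : x ≠ y)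
    (hx : ∀ t, 0 < t → t ≤ T → Sp (μ t) x) (hy : ∀ t, 0 < t → t ≤ T → Sp (μ t) y)
    {t : ℝ} (ht : 0 < t) (hT : t ≤ T) : Sp (μ t) (x + y) := by
  have hx0 := (hx t ht hT).1
  have hy0 := (hy t ht hT).1
  refine sp_of_small (by linarith) fun ε hε hεx => ?_
  have := S.finm
  rw [← bump_int_pos _ _ hε.le]
  by_contra hcon
  have hz : ∀ s, 0 ≤ s → s ≤ t → ∫ v, bump (x + y) ε v ∂(μ s) = 0 := by
    intro s hs hst
    obtain ⟨c, hc, H⟩ := S.bump_persist (by linarith) hε hεx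
    have h1 := H s t hs hst hT
    have h2 : 0 ≤ ∫ v, bump (x + y) ε v ∂(μ s) := integral_nonneg (bump_nonneg _ _)
    by_contra hne
    have h3 := lt_of_le_of_ne h2 (Ne.symm hne)
    have := mul_pos hc h3
    linarith
  have hLz : bump (x + y) ε 0 = 0 := bump_zero_left (by linarith)
  have e := S.weak_ext zero_lt_one (bump_lip (x + y) ε) (bump_nonneg _ _) (ε := x + y - ε)
    (by linarith) (fun _ h => bump_zero_left h) le_rfl ht.le hT
  rw [hz t ht.le le_rfl, hz 0 le_rfl ht.le] at e
  have pos : 0 < ∫ r in (0 : ℝ)..t, Xop κ μ (bump (x + y) ε) r := by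
    refine intervalIntegral.intervalIntegral_pos_of_pos_on
      (S.X_ii zero_le_one (bump_lip (x + y) ε) hLz 0 t) (fun r hr => ?_) ht
    have ae0 : ∀ᵐ v ∂(μ r), bump (x + y) ε v = 0 :=
      (integral_eq_zero_iff_of_nonneg (bump_nonneg _ _) (bump_int _ _ hε.le)).1
        (hz r hr.1.le hr.2.le)
    have a1 : ∀ᵐ p ∂((μ r).prod (μ r)), bump (x + y) ε p.1 = 0 :=
      Measure.quasiMeasurePreserving_fst.ae ae0
    have a2 : ∀ᵐ p ∂((μ r).prod (μ r)), bump (x + y) ε p.2 = 0 :=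
      Measure.quasiMeasurePreserving_snd.ae ae0
    unfold Xop
    rw [integral_pos_iff_support_of_nonneg_ae _ (S.int_X zero_le_one (bump_lip (x + y) ε) hLz r)]
    · let ε' := min (min (ε / 2) (|x - y| / 2)) (min x y)
      have hε' : 0 < ε' := by
        have : 0 < |x - y| := abs_pos.2 (sub_ne_zero.2 hxy)
        exact lt_min (lt_min (by linarith) (by linarith)) (lt_min hx0 hy0)
      have e1 : ε' ≤ ε / 2 := (min_le_left _ _).trans (min_le_left _ _)
      have e2 : ε' ≤ |x - y| / 2 := (min_le_left _ _).trans (min_le_right _ _)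
      have e3 : ε' ≤ x := (min_le_right _ _).trans (min_le_left _ _)
      have e4 : ε' ≤ y := (min_le_right _ _).trans (min_le_right _ _)
      have mpos : 0 < ((μ r).prod (μ r)) (Metric.ball x ε' ×ˢ Metric.ball y ε') := by
        rw [Measure.prod_prod]
        exact ENNReal.mul_pos ((hx r hr.1 (hr.2.le.trans hT)).2 ε' hε').ne'
          ((hy r hr.1 (hr.2.le.trans hT)).2 ε' hε').ne'
      refine mpos.trans_le (measure_mono_ae ?_)
      filter_upwards [a1, a2] with p b1 b2 hp
      obtain ⟨hp1, hp2⟩ := hp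
      rw [Metric.mem_ball, Real.dist_eq] at hp1 hp2
      have q1 := abs_lt.1 hp1
      have q2 := abs_lt.1 hp2
      change κ p * Dl _ p ≠ 0
      unfold Dl
      rw [b1, b2, sub_zero, sub_zero]
      refine (mul_pos (hpos p.1 p.2 (by linarith) (by linarith) ?_) (bump_pos.2 ?_)).ne'
      · intro heq
        rw [heq] at q1
        have : |x - y| < 2 * ε' := abs_lt.2 ⟨by linarith, by linarith⟩
        linarith
      · exact abs_lt.2 ⟨by linarith, by linarith⟩
    · filter_upwards [a1, a2] with p b1 b2
      unfold Dl
      rw [b1, b2, sub_zero, sub_zero]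
      exact mul_nonneg (S.κ_nonneg p) (bump_nonneg _ _ _)
  linarith

lemma unbounded (S : Sol κ γ B T C μ ν) [IsFiniteMeasure ν]
    (hpos : ∀ v w, 0 < v → 0 < w → v ≠ w → 0 < κ (v, w)) {x y : ℝ} (hxy : x < y)
    (hx : Sp ν x) (hy : Sp ν y) {t : ℝ} (ht : 0 < t) (hT : t ≤ T) (L : ℝ) :
    0 < μ t (Ici L) := by
  have key : ∀ n : ℕ, ∀ t, 0 < t → t ≤ T → Sp (μ t) (n * x + y) := by
    intro n
    induction n with
    | zero =>
      intro t ht hT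
      simpa using S.sp_init hy ht.le hT
    | succ n ih =>
      intro t ht hT
      have hx0 := hx.1
      have := S.sp_add hpos (x := x) (y := n * x + y) (by
        have : 0 ≤ n * x := by positivity
        linarith) (fun t ht hT => S.sp_init hx ht.le hT) ih ht hT
      convert! this using 1
      push_cast
      ring
  obtain ⟨n, hn⟩ := exists_nat_ge ((L + 1) / x)
  rw [div_le_iff₀ hx.1] at hn
  refine ((key n t ht hT).2 1 one_pos).trans_le (measure_mono ?_)
  intro v hv
  rw [Metric.mem_ball, Real.dist_eq] at hv
  have := (abs_lt.1 hv).1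
  have := hy.1
  rw [mem_Ici]
  linarith

/-! ### Truncated powers -/

/-- Derivative of the truncated power. -/
def dpsi (R m p v : ℝ) : ℝ := p * (max 0 (min (v - R) m)) ^ (p - 1)

/-- Truncated power of `v - R`: convex, with linear growth at infinity. -/
def psi (R m p v : ℝ) : ℝ := ∫ u in (0 : ℝ)..v, dpsi R m p u

section psi
variable {R m p : ℝ}

lemma dpsi_cont (hp : 1 < p) : Continuous (dpsi R m p) := by
  unfold dpsi
  refine continuous_const.mul (Continuous.rpow_const (by fun_prop) fun _ => Or.inr (by linarith))

lemma dpsi_nonneg (hp : 1 < p) (v : ℝ) : 0 ≤ dpsi R m p v :=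
  mul_nonneg (by linarith) (Real.rpow_nonneg (le_max_left _ _) _)

lemma dpsi_mono (hp : 1 < p) : Monotone (dpsi R m p) := by
  intro u v huv
  unfold dpsi
  refine mul_le_mul_of_nonneg_left (Real.rpow_le_rpow (le_max_left _ _) ?_ (by linarith))
    (by linarith)
  gcongr

lemma dpsi_zero (hp : 1 < p) (hm : 0 < m) {v : ℝ} (hv : v ≤ R) : dpsi R m p v = 0 := by
  unfold dpsi
  rw [max_eq_left, Real.zero_rpow (by linarith), mul_zero]
  exact (min_le_left _ _).trans (by linarith)

lemma dpsi_le (hp : 1 < p) (hm : 0 < m) (v : ℝ) : dpsi R m p v ≤ p * m ^ (p - 1) := by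
  unfold dpsi
  refine mul_le_mul_of_nonneg_left (Real.rpow_le_rpow (le_max_left _ _)
    (max_le hm.le (min_le_right _ _)) (by linarith)) (by linarith)

lemma dpsi_ii (hp : 1 < p) (a b : ℝ) : IntervalIntegrable (dpsi R m p) volume a b :=
  (dpsi_cont hp).intervalIntegrable _ _

lemma psi_sub (hp : 1 < p) (u v : ℝ) :
    psi R m p v - psi R m p u = ∫ x in u..v, dpsi R m p x := by
  unfold psi
  have := intervalIntegral.integral_add_adjacent_intervals
    (dpsi_ii (R := R) (m := m) hp 0 u) (dpsi_ii hp u v)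
  linarith

lemma psi_inc (hp : 1 < p) {u v : ℝ} (huv : u ≤ v) :
    (v - u) * dpsi R m p u ≤ psi R m p v - psi R m p u := by
  rw [psi_sub hp, ← smul_eq_mul, ← intervalIntegral.integral_const]
  exact intervalIntegral.integral_mono_on huv intervalIntegrable_const (dpsi_ii hp u v)
    fun x hx => dpsi_mono hp hx.1

lemma psi_mono (hp : 1 < p) : Monotone (psi R m p) := by
  intro u v huv
  have := psi_inc (R := R) (m := m) hp huv
  have h2 : 0 ≤ (v - u) * dpsi R m p u := mul_nonneg (by linarith) (dpsi_nonneg hp u)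
  linarith

lemma psi_lip (hp : 1 < p) (hm : 0 < m) : Lip (p * m ^ (p - 1)) (psi R m p) := by
  intro x y
  rw [psi_sub hp, abs_sub_comm x y, abs_sub_comm y x, ← Real.norm_eq_abs]
  refine intervalIntegral.norm_integral_le_of_norm_le_const fun u _ => ?_
  rw [Real.norm_eq_abs, abs_of_nonneg (dpsi_nonneg hp u)]
  exact dpsi_le hp hm u

lemma psi_zero (hp : 1 < p) (hm : 0 < m) (hR : 0 < R) {v : ℝ} (hv : v ≤ R) :
    psi R m p v = 0 := by
  unfold psi
  rw [intervalIntegral.integral_congr (g := fun _ => (0 : ℝ)), intervalIntegral.integral_zero]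
  intro u hu
  apply dpsi_zero hp hm
  rw [uIcc, mem_Icc] at hu
  exact hu.2.trans (max_le hR.le hv)

lemma psi_nonneg (hp : 1 < p) (hm : 0 < m) (hR : 0 < R) (v : ℝ) : 0 ≤ psi R m p v := by
  rcases le_total v R with h | h
  · rw [psi_zero hp hm hR h]
  · rw [← psi_zero hp hm hR le_rfl]
    exact psi_mono hp h

lemma psi_super (hp : 1 < p) {v w : ℝ} (hv : 0 ≤ v) (hw : 0 ≤ w) :
    0 ≤ Dl (psi R m p) (v, w) := by
  unfold Dl
  simp only
  rw [psi_sub hp, psi, sub_nonneg]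
  have : ∫ x in v..(v + w), dpsi R m p x = ∫ x in (0 : ℝ)..w, dpsi R m p (x + v) := by
    rw [intervalIntegral.integral_comp_add_right (fun x => dpsi R m p x)]
    simp [add_comm]
  rw [this]
  refine intervalIntegral.integral_mono_on hw (dpsi_ii hp 0 w) ?_ fun x _ =>
    dpsi_mono hp (by linarith)
  exact ((dpsi_cont hp).comp (continuous_add_const v)).intervalIntegrable _ _

lemma psi_Dl (hp : 1 < p) (hm : 0 < m) (hR : 0 < R) {v w : ℝ} (hw : 0 ≤ w)
    (hwR : w ≤ R) : w * dpsi R m p v ≤ Dl (psi R m p) (v, w) := by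
  unfold Dl
  simp only
  rw [psi_zero hp hm hR hwR]
  have := psi_inc (R := R) (m := m) (p := p) hp (u := v) (v := v + w) (by linarith)
  simpa using this

lemma psi_le_lin (hp : 1 < p) (hm : 0 < m) (hR : 0 < R) {v : ℝ} (hv : R ≤ v) :
    psi R m p v ≤ p * m ^ (p - 1) * (v - R) := by
  have := psi_lip (R := R) hp hm v R
  rw [psi_zero hp hm hR le_rfl, sub_zero, abs_of_nonneg (psi_nonneg hp hm hR v),
    abs_of_nonneg (by linarith)] at this
  exact this

lemma int_pow (hp : 1 < p) (v : ℝ) :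
    ∫ u in R..v, p * (u - R) ^ (p - 1) = (v - R) ^ p := by
  rw [intervalIntegral.integral_const_mul,
    intervalIntegral.integral_comp_sub_right (fun u => u ^ (p - 1)),
    integral_rpow (Or.inl (by linarith))]
  rw [sub_self, sub_add_cancel, Real.zero_rpow (by linarith)]
  field_simp
  simp

lemma psi_le_pow (hp : 1 < p) (hm : 0 < m) (hR : 0 < R) {v : ℝ} (hv : R ≤ v) :
    psi R m p v ≤ (v - R) ^ p := by
  have h1 := psi_sub (R := R) (m := m) hp R v
  rw [psi_zero hp hm hR le_rfl, sub_zero] at h1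
  rw [h1, ← int_pow hp]
  refine intervalIntegral.integral_mono_on hv (dpsi_ii hp _ _) ?_ ?_
  · refine Continuous.intervalIntegrable ?_ _ _
    exact continuous_const.mul (Continuous.rpow_const (by fun_prop) fun _ => Or.inr (by linarith))
  · intro u hu
    unfold dpsi
    refine mul_le_mul_of_nonneg_left (Real.rpow_le_rpow (le_max_left _ _) ?_ (by linarith))
      (by linarith)
    exact max_le (by linarith [hu.1]) (min_le_left _ _)

lemma psi_ge (hp : 1 < p) (hm : 0 < m) (hR : 0 < R) {v : ℝ} (hv : R + m ≤ v) :
    m ^ p ≤ psi R m p v := by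
  refine le_trans (le_of_eq ?_) (psi_mono hp hv)
  have h1 := psi_sub (R := R) (m := m) hp R (R + m)
  rw [psi_zero hp hm hR le_rfl, sub_zero] at h1
  have h2 := int_pow (R := R) hp (R + m)
  rw [add_sub_cancel_left] at h2
  rw [h1, ← h2]
  apply intervalIntegral.integral_congr
  intro u hu
  rw [uIcc_of_le (by linarith)] at hu
  unfold dpsi
  simp only
  rw [min_eq_left (by linarith [hu.2]), max_eq_right (by linarith [hu.1])]

/-- Comparison of truncated powers of different exponents. -/
lemma psi_compare {β : ℝ} (hp : 1 < p) (hβ : 0 < β) (hm : 0 < m) (hR : 0 < R) :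
    ∃ n : ℝ, 0 < n ∧ ∀ v, R ≤ v →
      p * psi R m (p + β) v ≤ (v - R) ^ (1 + β) * dpsi R n p v := by
  let q := p + β
  have hq : 1 < q := by simp only [q]; linarith
  have hq0 : 0 < q := by linarith
  refine ⟨m * q ^ (1 / (q - 1)), by positivity, fun v hv => ?_⟩
  set n := m * q ^ (1 / (q - 1)) with hn
  have hn0 : 0 < n := by positivity
  have hnq : n ^ (q - 1) = q * m ^ (q - 1) := by
    rw [hn, Real.mul_rpow hm.le (by positivity), ← Real.rpow_mul hq0.le,
      one_div_mul_cancel (by linarith), Real.rpow_one, mul_comm]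
  set w := v - R with hw
  have hw0 : 0 ≤ w := by linarith
  unfold dpsi
  rw [← hw, mul_left_comm]
  refine mul_le_mul_of_nonneg_left ?_ (by linarith)
  rcases le_total w n with h | h
  · rw [min_eq_left h, max_eq_right hw0, ← Real.rpow_add_of_nonneg hw0 (by linarith) (by linarith)]
    rw [show 1 + β + (p - 1) = p + β by ring]
    exact psi_le_pow hq hm hR hv
  · rw [min_eq_right h, max_eq_right hn0.le]
    refine (psi_le_lin hq hm hR hv).trans ?_
    change q * m ^ (q - 1) * w ≤ _
    rw [← hnq, show q - 1 = β + (p - 1) by simp only [q]; ring, Real.rpow_add hn0,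
      Real.rpow_add_of_nonneg hw0 (by linarith) hβ.le, Real.rpow_one]
    have : n ^ β ≤ w ^ β := Real.rpow_le_rpow hn0.le h hβ.le
    have h2 : 0 ≤ n ^ (p - 1) := by positivity
    calc n ^ β * n ^ (p - 1) * w ≤ w ^ β * n ^ (p - 1) * w := by gcongr
      _ = _ := by ring

end psi

/-! ### The moment iteration -/

lemma Psi_mono (S : Sol κ γ B T C μ ν) {R m p : ℝ} (hp : 1 < p) (hm : 0 < m) (hR : 0 < R)
    {s t : ℝ} (h0s : 0 ≤ s) (hst : s ≤ t) (htT : t ≤ T) :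
    (∫ v, psi R m p v ∂(μ s)) ≤ ∫ v, psi R m p v ∂(μ t) := by
  have hΛ : 0 < p * m ^ (p - 1) := by positivity
  have e := S.weak_ext hΛ (psi_lip hp hm) (psi_nonneg hp hm hR) hR
    (fun v hv => psi_zero hp hm hR hv) h0s hst htT
  have : 0 ≤ ∫ r in s..t, Xop κ μ (psi R m p) r := by
    refine intervalIntegral.integral_nonneg hst fun r _ => ?_
    refine integral_nonneg_of_ae ?_
    filter_upwards [S.ae_prod r] with q hq
    exact mul_nonneg (S.κ_nonneg q) (psi_super hp hq.1.le hq.2.le)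
  linarith

/-- One step: a bound on the `p`-th moments at time `t` bounds the `p + γ - 1`-th moments
at time `s < t`. -/
lemma step (S : Sol κ γ B T C μ ν) {R a b K₀ δ : ℝ} {η : ℝ → ℝ} (hR : 0 < R) (ha : 0 < a)
    (hbR : b ≤ R) (hK₀ : 0 < K₀) (hη0 : ∀ v, 0 ≤ η v) (hη1 : ∀ v, η v ≤ 1)
    (hηc : Continuous η)
    (hηs : ∀ v, η v ≠ 0 → a ≤ v ∧ v ≤ b)
    (hδ : ∀ t, 0 ≤ t → t ≤ T → δ ≤ ∫ v, η v ∂(μ t)) (hδ0 : 0 < δ)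
    (hκ : ∀ v w, R ≤ v → a ≤ w → w ≤ b → K₀ * v ^ γ ≤ κ (v, w))
    {p : ℝ} (hp : 1 < p) {s t D : ℝ} (h0s : 0 ≤ s) (hst : s < t) (htT : t ≤ T)
    (hD : ∀ m, 0 < m → (∫ v, psi R m p v ∂(μ t)) ≤ D) :
    ∀ m, 0 < m → (∫ v, psi R m (p + (γ - 1)) v ∂(μ s)) ≤
      D / ((K₀ * a * δ / 2) * p * (t - s)) := by
  intro m hm
  have hβ : 0 < γ - 1 := by linarith [S.γ1]
  have hq : 1 < p + (γ - 1) := by linarith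
  obtain ⟨n, hn, hcmp⟩ := psi_compare (R := R) hp hβ hm hR
  have hΛ : 0 < p * n ^ (p - 1) := by positivity
  have hΛ' : 0 < (p + (γ - 1)) * m ^ (p + (γ - 1) - 1) := by positivity
  have e := S.weak_ext hΛ (psi_lip hp hn) (psi_nonneg hp hn hR) hR
    (fun v hv => psi_zero hp hn hR hv) h0s hst.le htT
  set P := ∫ v, psi R m (p + (γ - 1)) v ∂(μ s) with hP
  have lowX : ∀ r, s ≤ r → r ≤ t → K₀ * a * p * P * δ ≤ Xop κ μ (psi R n p) r := by
    intro r hsr hrt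
    have := S.finm r
    have iη : Integrable η (μ r) := by
      refine (integrable_const (1 : ℝ)).mono' hηc.aestronglyMeasurable ?_
      filter_upwards with v
      rw [Real.norm_eq_abs, abs_of_nonneg (hη0 v)]
      exact hη1 v
    have iψ : Integrable (psi R m (p + (γ - 1))) (μ r) :=
      S.int_lip hΛ'.le (psi_lip hq hm) (psi_zero hq hm hR hR.le) r
    have h1 : ∫ z, (K₀ * a * p) * (psi R m (p + (γ - 1)) z.1 * η z.2) ∂((μ r).prod (μ r)) ≤
        Xop κ μ (psi R n p) r := by
      apply integral_mono_ae ((iψ.mul_prod iη).const_mul _)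
        (S.int_X hΛ.le (psi_lip hp hn) (psi_zero hp hn hR hR.le) r)
      filter_upwards [S.ae_prod r] with z hz
      have pos : 0 ≤ κ z * Dl (psi R n p) z :=
        mul_nonneg (S.κ_nonneg z) (psi_super hp hz.1.le hz.2.le)
      rcases le_total z.1 R with hzR | hzR
      · rw [psi_zero hq hm hR hzR]
        simpa using pos
      by_cases hηz : η z.2 = 0
      · rw [hηz]
        simpa using pos
      obtain ⟨hz1, hz2⟩ := hηs z.2 hηz
      have c1 : K₀ * z.1 ^ γ ≤ κ z := hκ z.1 z.2 hzR hz1 hz2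
      have c2 : z.2 * dpsi R n p z.1 ≤ Dl (psi R n p) z :=
        psi_Dl hp hn hR hz.2.le (hz2.trans hbR)
      have c3 := hcmp z.1 hzR
      have c4 : (z.1 - R) ^ (1 + (γ - 1)) ≤ z.1 ^ γ := by
        rw [show 1 + (γ - 1) = γ by ring]
        exact Real.rpow_le_rpow (by linarith) (by linarith) (by linarith)
      have d0 := dpsi_nonneg (R := R) (m := n) hp z.1
      have g0 : 0 ≤ z.1 ^ γ := Real.rpow_nonneg hz.1.le _
      have s0 := psi_nonneg hq hm hR z.1
      calc (K₀ * a * p) * (psi R m (p + (γ - 1)) z.1 * η z.2)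
          ≤ (K₀ * a * p) * (psi R m (p + (γ - 1)) z.1 * 1) := by
            have := hη1 z.2
            gcongr
        _ = K₀ * a * (p * psi R m (p + (γ - 1)) z.1) := by ring
        _ ≤ K₀ * a * (z.1 ^ γ * dpsi R n p z.1) := by
            refine mul_le_mul_of_nonneg_left (c3.trans ?_) (by positivity)
            exact mul_le_mul_of_nonneg_right c4 d0
        _ = (K₀ * z.1 ^ γ) * (a * dpsi R n p z.1) := by ring
        _ ≤ (K₀ * z.1 ^ γ) * (z.2 * dpsi R n p z.1) := by gcongr
        _ ≤ κ z * Dl (psi R n p) z := by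
            apply mul_le_mul c1 c2 (mul_nonneg hz.2.le d0) (S.κ_nonneg z)
    refine le_trans ?_ h1
    rw [integral_const_mul, integral_prod_mul (psi R m (p + (γ - 1))) η]
    have m1 := S.Psi_mono hq hm hR h0s hsr (hrt.trans htT)
    have m2 := hδ r (h0s.trans hsr) (hrt.trans htT)
    have m0 : 0 ≤ P := integral_nonneg (psi_nonneg hq hm hR)
    rw [mul_assoc (K₀ * a * p)]
    have m3 : 0 ≤ ∫ v, psi R m (p + (γ - 1)) v ∂(μ r) := m0.trans m1
    gcongr
  have mono : ∫ r in s..t, K₀ * a * p * P * δ ≤ ∫ r in s..t, Xop κ μ (psi R n p) r :=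
    intervalIntegral.integral_mono_on hst.le intervalIntegrable_const
      (S.X_ii hΛ.le (psi_lip hp hn) (psi_zero hp hn hR hR.le) s t) fun r hr => lowX r hr.1 hr.2
  rw [intervalIntegral.integral_const, smul_eq_mul] at mono
  have b1 := hD n hn
  have b2 : 0 ≤ ∫ v, psi R n p v ∂(μ s) := integral_nonneg (psi_nonneg hp hn hR)
  have hts : 0 < t - s := by linarith
  rw [le_div_iff₀ (by positivity)]
  linarith

lemma psi_base (S : Sol κ γ B T C μ ν) {R : ℝ} (hR : 0 < R) (t : ℝ) :
    ∀ m, 0 < m → (∫ v, psi R m γ v ∂(μ t)) ≤ C := by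
  intro m hm
  have hγ := S.γ1
  have hΛ : 0 < γ * m ^ (γ - 1) := by positivity
  refine le_trans ?_ (S.bd t)
  apply integral_mono_ae (S.int_lip hΛ.le (psi_lip hγ hm) (psi_zero hγ hm hR hR.le) t) (S.int t)
  filter_upwards [S.conc t] with v hv
  have h0 := Real.rpow_nonneg hv.le γ
  rcases le_total v R with h | h
  · rw [psi_zero hγ hm hR h]
    linarith
  · have h1 := psi_le_pow hγ hm hR h
    have h2 : (v - R) ^ γ ≤ v ^ γ := Real.rpow_le_rpow (by linarith) (by linarith) (by linarith)
    linarith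

/-- Iterating the step lemma: the solution at time `T / 2` is supported in a bounded set. -/
lemma bounded_support (S : Sol κ γ B T C μ ν) {R c : ℝ} (hR : 0 < R) (hc : 0 < c)
    (hstep : ∀ p, 1 < p → ∀ s t D, 0 ≤ s → s < t → t ≤ T →
      (∀ m, 0 < m → (∫ v, psi R m p v ∂(μ t)) ≤ D) →
      ∀ m, 0 < m → (∫ v, psi R m (p + (γ - 1)) v ∂(μ s)) ≤ D / (c * p * (t - s))) :
    ∃ L : ℝ, μ (T / 2) (Ici L) = 0 := by
  have hT := S.T0
  have hγ := S.γ1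
  have hβ : 0 < γ - 1 := by linarith
  have hC : 0 ≤ C := (S.rho_int_nonneg 0).trans (S.bd 0)
  have ind : ∀ τ, 0 < τ → ∀ j : ℕ, j * τ ≤ T → ∀ m, 0 < m →
      (∫ v, psi R m (γ + j * (γ - 1)) v ∂(μ (T - j * τ))) ≤
        C / ((c * (γ - 1) * τ) ^ j * (j.factorial : ℝ)) := by
    intro τ hτ j
    induction j with
    | zero =>
      intro _ m hm
      simpa using S.psi_base hR T m hm
    | succ j ih =>
      intro hj m hm
      push_cast at hj
      have hjτ : (j : ℝ) * τ ≤ T := by linarith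
      have hpj : 1 < γ + j * (γ - 1) := by
        have : 0 ≤ (j : ℝ) * (γ - 1) := by positivity
        linarith
      have h1 := hstep _ hpj (T - (j + 1) * τ) (T - j * τ) _ (by linarith) (by linarith)
        (by have : 0 ≤ (j : ℝ) * τ := by positivity
            linarith) (ih hjτ) m hm
      push_cast
      rw [show γ + ((j : ℝ) + 1) * (γ - 1) = γ + j * (γ - 1) + (γ - 1) by ring]
      refine h1.trans ?_
      rw [div_div]
      apply div_le_div_of_nonneg_left hC (by positivity)
      rw [Nat.factorial_succ, pow_succ]
      push_cast
      rw [show T - j * τ - (T - (j + 1) * τ) = τ by ring]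
      have h2 : (γ - 1) * (j + 1) ≤ γ + j * (γ - 1) := by linarith
      calc (c * (γ - 1) * τ) ^ j * (c * (γ - 1) * τ) * (((j : ℝ) + 1) * (j.factorial : ℝ))
          = (c * (γ - 1) * τ) ^ j * (j.factorial : ℝ) * (c * ((γ - 1) * (j + 1)) * τ) := by ring
        _ ≤ (c * (γ - 1) * τ) ^ j * (j.factorial : ℝ) * (c * (γ + j * (γ - 1)) * τ) := by
            gcongr
  set A := 2 * Real.exp 1 / (c * (γ - 1) * T) with hA
  have hA0 : 0 < A := by positivity
  have bnd : ∀ N : ℕ, 0 < N → ∀ m, 0 < m →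
      (∫ v, psi R m (γ + N * (γ - 1)) v ∂(μ (T / 2))) ≤ C * A ^ N := by
    intro N hN m hm
    have hN' : (0 : ℝ) < N := by exact_mod_cast hN
    have h1 := ind (T / (2 * N)) (by positivity) N (by field_simp; linarith) m hm
    rw [show T - N * (T / (2 * N)) = T / 2 by field_simp; ring] at h1
    refine h1.trans ?_
    rw [div_eq_mul_inv]
    refine mul_le_mul_of_nonneg_left ?_ hC
    have h2 := Real.pow_div_factorial_le_exp (x := (N : ℝ)) hN'.le N
    rw [show Real.exp (N : ℝ) = Real.exp 1 ^ N by rw [← Real.exp_nat_mul]; simp] at h2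
    have e1 : ((c * (γ - 1) * (T / (2 * N))) ^ N * (N.factorial : ℝ))⁻¹ =
        (2 / (c * (γ - 1) * T)) ^ N * ((N : ℝ) ^ N / (N.factorial : ℝ)) := by
      rw [div_pow, mul_pow, div_pow, mul_pow 2]
      field_simp
      rw [mul_pow]
    rw [e1]
    have e2 : A ^ N = (2 / (c * (γ - 1) * T)) ^ N * Real.exp 1 ^ N := by
      rw [← mul_pow, hA]
      congr 1
      ring
    rw [e2]
    gcongr
  set L := (2 * A + 1) ^ (1 / (γ - 1)) with hL
  have hL1 : 1 ≤ L := Real.one_le_rpow (by linarith) (by positivity)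
  have hL0 : 0 < L := by linarith
  have hLβ : L ^ (γ - 1) = 2 * A + 1 := by
    rw [hL, ← Real.rpow_mul (by linarith), one_div_mul_cancel hβ.ne', Real.rpow_one]
  have := S.finm (T / 2)
  refine ⟨R + L, ?_⟩
  set M := (μ (T / 2)).real (Ici (R + L)) with hM
  have hM0 : 0 ≤ M := measureReal_nonneg
  have small : ∀ N : ℕ, 0 < N → M ≤ C * (1 / 2) ^ N := by
    intro N hN
    have h1 := bnd N hN L hL0
    have hp : 1 < γ + N * (γ - 1) := by
      have : 0 ≤ (N : ℝ) * (γ - 1) := by positivity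
      linarith
    have hΛ : 0 < (γ + N * (γ - 1)) * L ^ (γ + N * (γ - 1) - 1) := by positivity
    have iψ := S.int_lip hΛ.le (psi_lip hp hL0) (psi_zero hp hL0 hR hR.le) (T / 2)
    have h2 : L ^ (γ + N * (γ - 1)) * M ≤ ∫ v, psi R L (γ + N * (γ - 1)) v ∂(μ (T / 2)) := by
      have h3 : ∫ v, (Ici (R + L)).indicator (fun _ => L ^ (γ + N * (γ - 1))) v ∂(μ (T / 2)) ≤
          ∫ v, psi R L (γ + N * (γ - 1)) v ∂(μ (T / 2)) := by
        apply integral_mono ((integrable_const _).indicator measurableSet_Ici) iψ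
        intro v
        by_cases hv : v ∈ Ici (R + L)
        · rw [indicator_of_mem hv]
          exact psi_ge hp hL0 hR hv
        · rw [indicator_of_notMem hv]
          exact psi_nonneg hp hL0 hR v
      rw [integral_indicator_const _ measurableSet_Ici, smul_eq_mul] at h3
      linarith
    have h4 : (2 * A) ^ N ≤ L ^ (γ + N * (γ - 1)) := by
      rw [Real.rpow_add hL0, mul_comm (N : ℝ), Real.rpow_mul hL0.le, hLβ, Real.rpow_natCast]
      have h5 : 1 ≤ L ^ γ := Real.one_le_rpow hL1 (by linarith)
      calc (2 * A) ^ N ≤ (2 * A + 1) ^ N := by gcongr; linarith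
        _ = 1 * (2 * A + 1) ^ N := by ring
        _ ≤ _ := by gcongr
    have h6 : (2 * A) ^ N * M ≤ C * A ^ N :=
      ((mul_le_mul_of_nonneg_right h4 hM0).trans h2).trans h1
    have hAN : 0 < A ^ N := by positivity
    rw [mul_pow] at h6
    have h7 : 2 ^ N * M ≤ C := by
      have : A ^ N * (2 ^ N * M) ≤ A ^ N * C := by linarith
      exact le_of_mul_le_mul_left this hAN
    rw [div_pow, one_pow, mul_one_div, le_div_iff₀ (by positivity)]
    linarith
  have lim : Tendsto (fun N : ℕ => C * (1 / 2 : ℝ) ^ N) atTop (nhds (C * 0)) :=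
    (tendsto_pow_atTop_nhds_zero_of_lt_one (by norm_num) (by norm_num)).const_mul C
  rw [mul_zero] at lim
  have hM00 : M ≤ 0 := ge_of_tendsto lim (by
    filter_upwards [eventually_gt_atTop 0] with N hN using small N hN)
  have : M = 0 := le_antisymm hM00 hM0
  exact (measureReal_eq_zero_iff).1 this

lemma absurd_of (S : Sol κ γ B T C μ ν) [IsFiniteMeasure ν]
    (hpos : ∀ v w, 0 < v → 0 < w → v ≠ w → 0 < κ (v, w))
    (hbig : ∀ b, 0 < b → ∃ R K₀ : ℝ, b ≤ R ∧ 0 < K₀ ∧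
      ∀ v w, R ≤ v → 0 < w → w ≤ b → K₀ * v ^ γ ≤ κ (v, w))
    {x y : ℝ} (hxy : x < y) (hx : Sp ν x) (hy : Sp ν y) : False := by
  have hx0 := hx.1
  let ε := min 1 (x / 2)
  have hε : 0 < ε := lt_min one_pos (by linarith)
  have hε1 : ε ≤ 1 := min_le_left _ _
  have hε2 : ε ≤ x / 2 := min_le_right _ _
  obtain ⟨R, K₀, hbR, hK₀, hκ⟩ := hbig (2 * x) (by linarith)
  have hR : 0 < R := by linarith
  obtain ⟨c, hc, H⟩ := S.bump_persist hx0 hε (by linarith)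
  let δ := c * ∫ v, bump x ε v ∂ν
  have hδ0 : 0 < δ := mul_pos hc ((bump_int_pos _ _ hε.le).2 (hx.2 ε hε))
  have hδ : ∀ t, 0 ≤ t → t ≤ T → δ ≤ ∫ v, bump x ε v ∂(μ t) := by
    intro t h0 hT
    have := H 0 t le_rfl h0 hT
    rwa [S.bump_init (by linarith)] at this
  have hηs : ∀ v, bump x ε v ≠ 0 → x / 2 ≤ v ∧ v ≤ 2 * x := by
    intro v hv
    have := bump_pos.1 (lt_of_le_of_ne (bump_nonneg x ε v) (Ne.symm hv))
    have := abs_lt.1 this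
    constructor <;> linarith
  obtain ⟨L, hL⟩ := S.bounded_support (R := R) (c := K₀ * (x / 2) * δ / 2) hR (by positivity)
    (fun p hp s t D h0s hst htT hD => S.step (b := 2 * x) hR (by linarith : 0 < x / 2) hbR hK₀
      (bump_nonneg x ε) (fun v => (bump_le hε.le).trans hε1) (bump_cont x ε) hηs hδ hδ0
      (fun v w hv hw hwb => hκ v w hv (by linarith) hwb) hp h0s hst htT hD)
  have hT := S.T0
  exact (S.unbounded hpos hxy hx hy (by linarith : 0 < T / 2) (by linarith) L).ne' hL

end Sol

/-! ### Reduction of the concrete problem -/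

lemma two_points (ν : Measure ℝ) [IsFiniteMeasure ν] (hconc : ν (Iic 0) = 0) (hne : ν ≠ 0)
    (hdirac : ¬ IsSingleDirac ν) : ∃ x y, x < y ∧ Sol.Sp ν x ∧ Sol.Sp ν y := by
  have hsp : ∀ x ∈ ν.support ∩ Ioi 0, Sol.Sp ν x := by
    intro x hx
    exact ⟨hx.2, fun ε hε =>
      (Measure.mem_support_iff_forall x).1 hx.1 _ (Metric.ball_mem_nhds x hε)⟩
  have hnull : ν (ν.support ∩ Ioi 0)ᶜ = 0 := by
    rw [compl_inter, compl_Ioi]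
    exact measure_union_null Measure.measure_compl_support hconc
  have hnon : (ν.support ∩ Ioi 0).Nontrivial := by
    by_contra hcon
    rw [not_nontrivial_iff] at hcon
    rcases hcon.eq_empty_or_singleton with he | ⟨V, hV⟩
    · rw [he, compl_empty] at hnull
      exact hne (Measure.measure_univ_eq_zero.1 hnull)
    · have hVm : V ∈ ν.support ∩ Ioi 0 := by rw [hV]; rfl
      rw [hV] at hnull
      have hr : ν.restrict {V} = ν := Measure.restrict_eq_self_of_ae_mem (by
        rw [ae_iff]; exact hnull)
      rw [Measure.restrict_singleton] at hr
      apply hdirac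
      refine ⟨(ν {V}).toReal, V, ?_, hVm.2, ?_⟩
      · apply ENNReal.toReal_pos _ (measure_ne_top _ _)
        intro h0
        rw [h0, zero_smul] at hr
        exact hne hr.symm
      · rw [ENNReal.ofReal_toReal (measure_ne_top _ _), hr]
  obtain ⟨x, hx, y, hy, hxy⟩ := hnon
  rcases lt_or_gt_of_ne hxy with h | h
  · exact ⟨x, y, h, hsp x hx, hsp y hy⟩
  · exact ⟨y, x, h, hsp y hy, hsp x hx⟩

lemma finite_of_rho {γ : ℝ} (m : Measure ℝ) (hc : m (Iic 0) = 0)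
    (hi : Integrable (fun v => 1 + v ^ γ) m) : IsFiniteMeasure m := by
  have h1 : Integrable (fun _ : ℝ => (1 : ℝ)) m := by
    refine hi.mono' aestronglyMeasurable_const ?_
    have : ∀ᵐ v ∂m, 0 < v := by
      rw [ae_iff]
      convert hc using 2
      ext v
      simp
    filter_upwards [this] with v hv
    have := Real.rpow_nonneg hv.le γ
    simp
    linarith
  rw [integrable_const_iff] at h1
  exact h1.resolve_left one_ne_zero

/-- The kernel restricted to the open quadrant. -/
def kq (K : ℝ → ℝ → ℝ) : ℝ × ℝ → ℝ :=
  (Ioi 0 ×ˢ Ioi 0).indicator (fun p => K p.1 p.2)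

lemma kq_eq (K : ℝ → ℝ → ℝ) {v w : ℝ} (hv : 0 < v) (hw : 0 < w) : kq K (v, w) = K v w := by
  unfold kq
  rw [indicator_of_mem]
  exact ⟨hv, hw⟩

section kernel
variable {K h : ℝ → ℝ → ℝ} {g : ℝ → ℝ} {γ H H₀ H₁ G₀ G₁ k : ℝ}

lemma frac_mem {v w : ℝ} (hv : 0 < v) (hw : 0 < w) : v / (v + w) ∈ Icc (0 : ℝ) 1 :=
  ⟨by positivity, by rw [div_le_one (by positivity)]; linarith⟩

lemma kq_meas (hK : KernelAssumptionA K h g γ H H₀ H₁ G₀ G₁ k) : Measurable (kq K) := by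
  have hms : MeasurableSet (Ioi (0 : ℝ) ×ˢ Ioi (0 : ℝ)) := measurableSet_Ioi.prod measurableSet_Ioi
  have hc : ContinuousOn (fun p : ℝ × ℝ => K p.1 p.2) (Ioi 0 ×ˢ Ioi 0) := by
    have h1 : ContinuousOn (fun p : ℝ × ℝ => h p.1 p.2 * g (p.1 / (p.1 + p.2)))
        (Ioi 0 ×ˢ Ioi 0) := by
      refine ContinuousOn.mul (hK.h_cont.mono (prod_mono Ioi_subset_Ici_self Ioi_subset_Ici_self)) ?_
      refine hK.g_cont.comp (t := Icc 0 1) ?_ fun p hp => frac_mem hp.1 hp.2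
      refine ContinuousOn.div (by fun_prop) (by fun_prop) fun p hp => ?_
      have a : 0 < p.1 := hp.1
      have b : 0 < p.2 := hp.2
      positivity
    refine h1.congr fun p hp => ?_
    have a : 0 < p.1 := hp.1
    have b : 0 < p.2 := hp.2
    exact hK.K_eq _ _ a.le b.le (by positivity)
  classical
  have := ContinuousOn.measurable_piecewise hc (g := fun _ => (0 : ℝ)) continuousOn_const hms
  unfold kq
  rw [← piecewise_eq_indicator]
  exact this

lemma g_nonneg' (hK : KernelAssumptionA K h g γ H H₀ H₁ G₀ G₁ k) {x : ℝ} (hx : x ∈ Icc (0 : ℝ) 1) :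
    0 ≤ g x := by
  have h1 := hK.g_lower x hx
  have h2 : 0 ≤ G₀ * |x - 1 / 2| ^ k := mul_nonneg hK.G₀_pos.le (Real.rpow_nonneg (abs_nonneg _) _)
  linarith

lemma kq_nonneg (hK : KernelAssumptionA K h g γ H H₀ H₁ G₀ G₁ k) (p : ℝ × ℝ) : 0 ≤ kq K p := by
  unfold kq
  refine indicator_nonneg (fun p hp => ?_) p
  have a : 0 < p.1 := hp.1
  have b : 0 < p.2 := hp.2
  exact hK.K_nonneg _ _ a.le b.le

lemma kq_le (hK : KernelAssumptionA K h g γ H H₀ H₁ G₀ G₁ k) (v w : ℝ) (hv : 0 < v) (hw : 0 < w) :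
    kq K (v, w) ≤ H₁ * G₁ * (v ^ γ + w ^ γ) := by
  rw [kq_eq K hv hw, hK.K_eq v w hv.le hw.le (by positivity)]
  have hx := frac_mem hv hw
  have h1 := hK.h_upper v w hv.le hw.le
  have h2 := hK.g_upper _ hx
  have h3 := g_nonneg' hK hx
  have h4 := hK.H₁_pos
  calc h v w * g (v / (v + w)) ≤ H₁ * (v ^ γ + w ^ γ) * g (v / (v + w)) := by gcongr
    _ ≤ H₁ * (v ^ γ + w ^ γ) * G₁ := by gcongr
    _ = _ := by ring

lemma kq_pos (hK : KernelAssumptionA K h g γ H H₀ H₁ G₀ G₁ k) (v w : ℝ) (hv : 0 < v) (hw : 0 < w)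
    (hne : v ≠ w) : 0 < kq K (v, w) := by
  rw [kq_eq K hv hw, hK.K_eq v w hv.le hw.le (by positivity)]
  have hx := frac_mem hv hw
  have hR : 0 < v + w + 1 / v + 1 / w := by positivity
  have iv : 0 < 1 / v := by positivity
  have iw : 0 < 1 / w := by positivity
  obtain ⟨c, hc, hh⟩ := hK.h_posOn (v + w + 1 / v + 1 / w) hR
  have key : ∀ z, 0 < z → 1 / z ≤ v + w + 1 / v + 1 / w → 1 / (v + w + 1 / v + 1 / w) ≤ z := by
    intro z hz h
    rw [div_le_iff₀ hz] at h
    rw [div_le_iff₀ hR]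
    linarith
  have h1 := hh v ⟨key v hv (by linarith), by linarith⟩ w ⟨key w hw (by linarith), by linarith⟩
  refine mul_pos (hc.trans_le h1) (lt_of_lt_of_le ?_ (hK.g_lower _ hx))
  refine mul_pos hK.G₀_pos (Real.rpow_pos_of_pos (abs_pos.2 fun h0 => hne ?_) _)
  rw [sub_eq_zero, div_eq_div_iff (by positivity) (by norm_num)] at h0
  linarith

lemma kq_big (hK : KernelAssumptionA K h g γ H H₀ H₁ G₀ G₁ k) (b : ℝ) (hb : 0 < b) :
    ∃ R K₀ : ℝ, b ≤ R ∧ 0 < K₀ ∧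
      ∀ v w, R ≤ v → 0 < w → w ≤ b → K₀ * v ^ γ ≤ kq K (v, w) := by
  have hH := hK.H_gt_one
  have h0 := hK.H₀_pos
  have g0 := hK.G₀_pos
  refine ⟨4 * b + H, H₀ * (G₀ * (3 / 10 : ℝ) ^ k), by linarith, by positivity, ?_⟩
  intro v w hv hw hwb
  have hv0 : 0 < v := by linarith
  have hx := frac_mem hv0 hw
  rw [kq_eq K hv0 hw, hK.K_eq v w hv0.le hw.le (by positivity)]
  have h1 := hK.h_lower v w hv0.le hw.le (by linarith)
  have h2 := hK.g_lower _ hx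
  have h3 : (3 / 10 : ℝ) ≤ |v / (v + w) - 1 / 2| := by
    refine le_trans ?_ (le_abs_self _)
    have : (4 / 5 : ℝ) ≤ v / (v + w) := by
      rw [le_div_iff₀ (by positivity)]; linarith
    linarith
  have h4 : G₀ * (3 / 10 : ℝ) ^ k ≤ g (v / (v + w)) := by
    refine le_trans ?_ h2
    have := hK.k_ge_one
    gcongr
  have h5 : H₀ * v ^ γ ≤ h v w := by
    refine le_trans ?_ h1
    have := Real.rpow_nonneg hw.le γ
    gcongr
    linarith
  have h6 : 0 ≤ H₀ * v ^ γ := by positivity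
  calc H₀ * (G₀ * (3 / 10 : ℝ) ^ k) * v ^ γ = (H₀ * v ^ γ) * (G₀ * (3 / 10 : ℝ) ^ k) := by ring
    _ ≤ h v w * g (v / (v + w)) := by
      refine mul_le_mul h5 h4 (by positivity) (h6.trans h5)

lemma double_eq (hK : KernelAssumptionA K h g γ H H₀ H₁ G₀ G₁ k) (m : Measure ℝ) [IsFiniteMeasure m]
    (hc : ∀ᵐ v ∂m, 0 < v) (hi : Integrable (fun v => 1 + v ^ γ) m) {φ : ℝ → ℝ} (hφ : Continuous φ)
    {M : ℝ} (hM : ∀ v, |φ v| ≤ M) :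
    (∫ v, (∫ v', K v v' * (φ (v + v') - φ v - φ v') ∂m) ∂m) =
      ∫ p, kq K p * Dl φ p ∂(m.prod m) := by
  have hM0 : 0 ≤ M := (abs_nonneg _).trans (hM 0)
  have hB : 0 ≤ H₁ * G₁ := mul_nonneg hK.H₁_pos.le hK.G₁_pos.le
  have hint : Integrable (fun p : ℝ × ℝ => kq K p * Dl φ p) (m.prod m) := by
    have hd := (hi.mul_prod hi).const_mul (H₁ * G₁ * (3 * M))
    refine hd.mono' ((kq_meas hK).mul (Sol.Dl_meas hφ)).aestronglyMeasurable ?_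
    have a1 : ∀ᵐ p ∂(m.prod m), 0 < p.1 := Measure.quasiMeasurePreserving_fst.ae hc
    have a2 : ∀ᵐ p ∂(m.prod m), 0 < p.2 := Measure.quasiMeasurePreserving_snd.ae hc
    filter_upwards [a1, a2] with p h1 h2
    have b1 := kq_le hK p.1 p.2 h1 h2
    have b2 := kq_nonneg hK p
    have b3 : |Dl φ p| ≤ 3 * M := by
      unfold Dl
      have c1 := abs_le.1 (hM (p.1 + p.2))
      have c2 := abs_le.1 (hM p.1)
      have c3 := abs_le.1 (hM p.2)
      rw [abs_le]
      constructor <;> linarith [c1.1, c1.2, c2.1, c2.2, c3.1, c3.2]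
    have e1 := Real.rpow_nonneg h1.le γ
    have e2 := Real.rpow_nonneg h2.le γ
    rw [Real.norm_eq_abs, abs_mul, abs_of_nonneg b2]
    calc kq K p * |Dl φ p| ≤ H₁ * G₁ * (p.1 ^ γ + p.2 ^ γ) * (3 * M) :=
          mul_le_mul b1 b3 (abs_nonneg _) (by positivity)
      _ ≤ H₁ * G₁ * ((1 + p.1 ^ γ) * (1 + p.2 ^ γ)) * (3 * M) := by
          gcongr
          nlinarith [mul_nonneg e1 e2]
      _ = _ := by ring
  rw [integral_prod _ hint]
  refine integral_congr_ae ?_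
  filter_upwards [hc] with v hv
  refine integral_congr_ae ?_
  filter_upwards [hc] with w hw
  simp only [kq_eq K hv hw, Dl]

lemma sol_of (hK : KernelAssumptionA K h g γ H H₀ H₁ G₀ G₁ k) {T : ℝ} (hT : 0 < T)
    {f : ℝ → Measure ℝ} {fin : Measure ℝ} (hf : IsWeakSolution K γ T f fin) :
    ∃ C, Sol (kq K) γ (H₁ * G₁) T C (fun r => f (max 0 (min T r))) fin := by
  obtain ⟨C, hC⟩ := hf.moment_bound
  have hcl : ∀ r, max 0 (min T r) ∈ Icc (0 : ℝ) T := fun r =>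
    ⟨le_max_left _ _, max_le hT.le (min_le_left _ _)⟩
  have hid : ∀ r ∈ Icc (0 : ℝ) T, max 0 (min T r) = r := fun r hr => by
    rw [min_eq_right hr.2, max_eq_right hr.1]
  have hfin : ∀ t ∈ Icc (0 : ℝ) T, IsFiniteMeasure (f t) := fun t ht =>
    finite_of_rho _ (hf.conc t ht) (hC t ht).1
  have hpos : ∀ t ∈ Icc (0 : ℝ) T, ∀ᵐ v ∂(f t), 0 < v := fun t ht => by
    rw [ae_iff]
    convert hf.conc t ht using 2
    ext v
    simp
  refine ⟨C, ?_⟩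
  refine
    { γ1 := hK.γ_gt_one
      B0 := mul_nonneg hK.H₁_pos.le hK.G₁_pos.le
      T0 := hT
      κ_meas := kq_meas hK
      κ_nonneg := kq_nonneg hK
      κ_le := kq_le hK
      finm := fun r => hfin _ (hcl r)
      conc := fun r => hpos _ (hcl r)
      cont := ?_
      int := fun r => (hC _ (hcl r)).1
      bd := fun r => (hC _ (hcl r)).2
      weak := ?_ }
  · intro φ hφ hb
    have h1 := hf.time_cont φ hφ hb
    exact h1.comp_continuous (f := fun r => max 0 (min T r)) (by fun_prop) hcl
  · intro φ hφ hcs hsup t ht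
    have h1 := hf.weak_form φ hφ hcs hsup t ht
    simp only [hid t ht]
    rw [h1]
    congr 1
    refine intervalIntegral.integral_congr fun r hr => ?_
    rw [uIcc_of_le ht.1] at hr
    have hr' : r ∈ Icc (0 : ℝ) T := ⟨hr.1, hr.2.trans ht.2⟩
    obtain ⟨M, hM⟩ := hφ.bounded_above_of_compact_support hcs
    have := hfin r hr'
    simp only [Xop, hid r hr']
    exact double_eq hK (f r) (hpos r hr') (hC r hr').1 hφ hM

end kernel

/-- Non-existence of any weak solution: if `K` satisfies
Assumption A and the initial datum is a nonzero Radon measure on `(0,∞)` with finite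
`γ`-moment which is not a single Dirac measure, then for every `T > 0` there is no
weak solution on `[0,T]` at all (mass-conserving or not). -/
theorem no_weak_solution
    (K h : ℝ → ℝ → ℝ) (g : ℝ → ℝ) (γ H H₀ H₁ G₀ G₁ k : ℝ)
    (hK : KernelAssumptionA K h g γ H H₀ H₁ G₀ G₁ k)
    (fin : Measure ℝ) (hconc : fin (Iic 0) = 0) (hne : fin ≠ 0)
    (hγmom : Integrable (fun v => 1 + v ^ γ) fin)
    (hdirac : ¬ IsSingleDirac fin) :
    ∀ T : ℝ, 0 < T → ¬ ∃ f : ℝ → Measure ℝ, IsWeakSolution K γ T f fin := by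
  intro T hT hex
  obtain ⟨f, hf⟩ := hex
  obtain ⟨C, S⟩ := sol_of hK hT hf
  have hfm : IsFiniteMeasure fin := finite_of_rho fin hconc hγmom
  obtain ⟨x, y, hxy, hx, hy⟩ := two_points fin hconc hne hdirac
  exact S.absurd_of (kq_pos hK) (kq_big hK) hxy hx hy
end
end
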